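/- arXiv:2104.04475 — 4 statements merged into one kernel-verified Lean document; each statement's English description precedes it below -/
import Mathlib

section
/- Let A and B be finitely generated groups, each admitting a regular positive cone with respect to some finite generating set. Then the group (A * B) × ℤ, where A * B is the free product of A and B, admits a regular positive cone with respect to some finite generating set. -/
/-!
On the free product `A * B` there is the quasimorphism `T` of Dicks and Šunić: on the normal form of
`g`, `T g` is the number of positive syllables minus the number of negative ones, plus the number of
places where a syllable of `A` is followed by one of `B`, minus the number of places where a syllable
of `B` is followed by one of `A`. It satisfies `|T (g * h) - T g - T h| ≤ 1`
(`FreeProd.abs_T_mul_le`) and it is odd on nontrivial elements (`FreeProd.odd_T`). Hence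
`{(g, n) | 2 * n + T g > 0}` is a positive cone of `(A * B) × ℤ`
(`FreeProd.isPositiveCone_cone`).

This cone is regular because the central factor can keep the quasimorphism bounded along the normal
form. Each syllable is multiplied by a power of the central generator which depends only on its
factor and on its sign, in such a way that `2 * n + T g` is `1` for the resulting products which
start in `A` and `-1` for those which start in `B`; the rest of the cone is obtained by multiplying
by powers of the central generator. This writes the cone in terms of the positive cones of `A` and
`B`, their inverses and single elements by unions, products and generated submonoids
(`FreeProd.cone_eq`, `FreeProd.wrds_eq`). Rational subsets of a monoid, defined by finite automata
with labels in that monoid, are closed under these operations, and in a finitely generated group they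
are the evaluations of regular languages (`IsRational.hasRegularConeEval`).

Normal forms are those of `Monoid.CoprodI` over `Bool`, to which the binary free product is
isomorphic.
-/

/-- A positive cone on a group `G`: a subsemigroup `P` such that
`G = P ⊔ P⁻¹ ⊔ {1}` is a disjoint union. -/
def IsPositiveCone {G : Type*} [Group G] (P : Set G) : Prop :=
  (∀ a ∈ P, ∀ b ∈ P, a * b ∈ P) ∧
  (∀ g : G, g ∈ P ∨ g⁻¹ ∈ P ∨ g = 1) ∧
  (∀ g ∈ P, g⁻¹ ∉ P) ∧ (1 : G) ∉ P

/-- A positive cone on `G` relative to a subgroup `H`: a subsemigroup `P` with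
`G = P ⊔ H ⊔ P⁻¹` a disjoint union. -/
def IsRelPositiveCone {G : Type*} [Group G] (H : Subgroup G) (P : Set G) : Prop :=
  (∀ a ∈ P, ∀ b ∈ P, a * b ∈ P) ∧
  (∀ g : G, g ∈ P ∨ g⁻¹ ∈ P ∨ g ∈ H) ∧
  (∀ g ∈ P, g⁻¹ ∉ P) ∧ (∀ g ∈ P, g ∉ H)

/-- A positive cone of the subgroup `H`, viewed as a subset of the ambient group `G`. -/
def IsPositiveConeIn {G : Type*} [Group G] (H : Subgroup G) (P : Set G) : Prop :=
  P ⊆ (H : Set G) ∧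
  (∀ a ∈ P, ∀ b ∈ P, a * b ∈ P) ∧
  (∀ h ∈ H, h ∈ P ∨ h⁻¹ ∈ P ∨ h = 1) ∧
  (∀ g ∈ P, g⁻¹ ∉ P) ∧ (1 : G) ∉ P

/-- The evaluation (image) in `G` of a language `L ⊆ X*` under a monoid
homomorphism `π : X* → G`. -/
def evalLang {X : Type*} {G : Type*} [Group G] (π : FreeMonoid X →* G) (L : Language X) :
    Set G :=
  (fun w : List X => π (FreeMonoid.ofList w)) '' L

/-- `S ⊆ G` is the evaluation of a regular language over some finite generating set of `G`. -/
def HasRegularConeEval {G : Type*} [Group G] (S : Set G) : Prop :=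
  ∃ (X : Type) (_ : Fintype X) (π : FreeMonoid X →* G),
    Function.Surjective π ∧ ∃ L : Language X, L.IsRegular ∧ evalLang π L = S

/-! ### Rational subsets of a monoid -/

/-- The behaviour of a finite automaton with state set `Q` and transitions labelled by elements of
a monoid `G`: `Beh E F p g` says that `g` is the product of the labels along some run from `p`.
The set `E p q` consists of the labels of the transitions from `p` to `q`, and `F p` of the labels
of the transitions by which a run may end at `p`. Equivalently, `Beh E F` is the least solution of
the right-linear system `X p = F p ∪ ⋃ q, E p q * X q`. -/
inductive Beh {G Q : Type*} [Monoid G] (E : Q → Q → Set G) (F : Q → Set G) : Q → G → Prop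
  | halt {p : Q} {g : G} (h : g ∈ F p) : Beh E F p g
  | step {p q : Q} {a g : G} (h : a ∈ E p q) (hg : Beh E F q g) : Beh E F p (a * g)

/-- A subset of a monoid is rational if it is the behaviour of a state of an automaton with finitely
many states and transitions. -/
def IsRational {G : Type*} [Monoid G] (S : Set G) : Prop :=
  ∃ (Q : Type) (_ : Finite Q) (E : Q → Q → Set G) (F : Q → Set G) (p : Q),
    (∀ p q, (E p q).Finite) ∧ (∀ p, (F p).Finite) ∧ S = {g | Beh E F p g}

namespace IsRational

variable {G : Type*} [Monoid G]

theorem singleton (g : G) : IsRational ({g} : Set G) := by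
  refine ⟨Unit, inferInstance, fun _ _ => ∅, fun _ => {g}, (), by simp, by simp, ?_⟩
  ext x
  constructor
  · rintro hx
    exact .halt hx
  · rintro (h | ⟨h, _⟩)
    · exact h
    · exact h.elim

theorem union {S T : Set G} (hS : IsRational S) (hT : IsRational T) : IsRational (S ∪ T) := by
  obtain ⟨Q₁, _, E₁, F₁, p₁, hE₁, hF₁, rfl⟩ := hS
  obtain ⟨Q₂, _, E₂, F₂, p₂, hE₂, hF₂, rfl⟩ := hT
  -- a new start state, from which the start state of either automaton is reached by the label `1`
  let E : Option (Q₁ ⊕ Q₂) → Option (Q₁ ⊕ Q₂) → Set G := fun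
    | some (.inl p), some (.inl q) => E₁ p q
    | some (.inr p), some (.inr q) => E₂ p q
    | none, some (.inl q) => {a | a = 1 ∧ q = p₁}
    | none, some (.inr q) => {a | a = 1 ∧ q = p₂}
    | _, _ => ∅
  let F : Option (Q₁ ⊕ Q₂) → Set G := fun
    | some (.inl p) => F₁ p
    | some (.inr p) => F₂ p
    | none => ∅
  have h₁ : ∀ p g, Beh E F (some (.inl p)) g ↔ Beh E₁ F₁ p g := by
    refine fun p g => ⟨fun h => ?_, fun h => ?_⟩
    · generalize hs : some (Sum.inl p) = s at h
      induction h generalizing p with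
      | halt h => subst hs; exact .halt h
      | @step _ q _ _ h _ ih =>
        subst hs
        rcases q with _ | q | q
        · exact h.elim
        · exact .step h (ih q rfl)
        · exact h.elim
    · induction h with
      | halt h => exact .halt h
      | @step p q _ _ h _ ih => exact .step (q := some (Sum.inl q)) h ih
  have h₂ : ∀ p g, Beh E F (some (.inr p)) g ↔ Beh E₂ F₂ p g := by
    refine fun p g => ⟨fun h => ?_, fun h => ?_⟩
    · generalize hs : some (Sum.inr p) = s at h
      induction h generalizing p with
      | halt h => subst hs; exact .halt h
      | @step _ q _ _ h _ ih =>
        subst hs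
        rcases q with _ | q | q
        · exact h.elim
        · exact h.elim
        · exact .step h (ih q rfl)
    · induction h with
      | halt h => exact .halt h
      | @step p q _ _ h _ ih => exact .step (q := some (Sum.inr q)) h ih
  refine ⟨Option (Q₁ ⊕ Q₂), inferInstance, E, F, none, ?_, ?_, ?_⟩
  · rintro (_ | p | p) (_ | q | q)
    all_goals first
      | exact Set.finite_empty
      | exact hE₁ _ _
      | exact hE₂ _ _
      | exact (Set.finite_singleton (1 : G)).subset fun _ h => h.1
  · rintro (_ | p | p)
    exacts [Set.finite_empty, hF₁ p, hF₂ p]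
  · ext g
    constructor
    · rintro (h | h)
      · simpa using Beh.step (p := none) (E := E) (show (1 : G) ∈ E none (some (.inl p₁)) from
          ⟨rfl, rfl⟩) ((h₁ _ _).2 h)
      · simpa using Beh.step (p := none) (E := E) (show (1 : G) ∈ E none (some (.inr p₂)) from
          ⟨rfl, rfl⟩) ((h₂ _ _).2 h)
    · rintro (h | @⟨_, _ | q | q, _, _, h, hg⟩)
      · exact h.elim
      · exact h.elim
      · obtain ⟨rfl, rfl⟩ := h
        exact .inl (by simpa using (h₁ _ _).1 hg)
      · obtain ⟨rfl, rfl⟩ := h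
        exact .inr (by simpa using (h₂ _ _).1 hg)

open Pointwise in
theorem mul {S T : Set G} (hS : IsRational S) (hT : IsRational T) : IsRational (S * T) := by
  obtain ⟨Q₁, _, E₁, F₁, p₁, hE₁, hF₁, rfl⟩ := hS
  obtain ⟨Q₂, _, E₂, F₂, p₂, hE₂, hF₂, rfl⟩ := hT
  -- instead of stopping, a run of the first automaton moves on to the start of the second one
  let E : Q₁ ⊕ Q₂ → Q₁ ⊕ Q₂ → Set G := fun
    | .inl p, .inl q => E₁ p q
    | .inr p, .inr q => E₂ p q
    | .inl p, .inr q => {a | a ∈ F₁ p ∧ q = p₂}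
    | _, _ => ∅
  let F : Q₁ ⊕ Q₂ → Set G := fun
    | .inl _ => ∅
    | .inr p => F₂ p
  have h₂ : ∀ p g, Beh E F (.inr p) g ↔ Beh E₂ F₂ p g := by
    refine fun p g => ⟨fun h => ?_, fun h => ?_⟩
    · generalize hs : Sum.inr p = s at h
      induction h generalizing p with
      | halt h => subst hs; exact .halt h
      | @step _ q _ _ h _ ih =>
        subst hs
        rcases q with q | q
        · exact h.elim
        · exact .step h (ih q rfl)
    · induction h with
      | halt h => exact .halt h
      | @step p q _ _ h _ ih => exact .step (q := Sum.inr q) h ih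
  have h₁ : ∀ p g, Beh E F (.inl p) g ↔ ∃ a b, Beh E₁ F₁ p a ∧ Beh E₂ F₂ p₂ b ∧ a * b = g := by
    refine fun p g => ⟨fun h => ?_, ?_⟩
    · generalize hs : Sum.inl p = s at h
      induction h generalizing p with
      | halt h => subst hs; exact h.elim
      | @step _ q a _ h hg ih =>
        subst hs
        rcases q with q | q
        · obtain ⟨x, y, hx, hy, rfl⟩ := ih q rfl
          exact ⟨a * x, y, .step h hx, hy, mul_assoc _ _ _⟩
        · obtain ⟨h, rfl⟩ := h
          exact ⟨a, _, .halt h, (h₂ _ _).1 hg, rfl⟩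
    · rintro ⟨a, b, ha, hb, rfl⟩
      induction ha with
      | halt h => exact .step (q := Sum.inr p₂) ⟨h, rfl⟩ ((h₂ _ _).2 hb)
      | @step p q x y h _ ih =>
        rw [mul_assoc]
        exact .step (q := Sum.inl q) h ih
  refine ⟨Q₁ ⊕ Q₂, inferInstance, E, F, .inl p₁, ?_, ?_, ?_⟩
  · rintro (p | p) (q | q)
    exacts [hE₁ _ _, (hF₁ p).subset fun _ h => h.1, Set.finite_empty, hE₂ _ _]
  · rintro (p | p)
    exacts [Set.finite_empty, hF₂ p]
  · ext g
    exact Iff.trans Set.mem_mul (by simp [h₁])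

theorem closure {S : Set G} (hS : IsRational S) :
    IsRational (Submonoid.closure S : Set G) := by
  obtain ⟨Q, _, E₀, F₀, p₀, hE, hF, rfl⟩ := hS
  -- a new state, at which each run starts and ends, and to which a run returns instead of stopping
  let E : Option Q → Option Q → Set G := fun
    | some p, some q => E₀ p q
    | none, some q => {a | a = 1 ∧ q = p₀}
    | some p, none => F₀ p
    | none, none => ∅
  let F : Option Q → Set G := fun
    | some _ => ∅
    | none => {1}
  set C := Submonoid.closure {g | Beh E₀ F₀ p₀ g} with hC
  have h₁ : ∀ p g, Beh E F p g → match p with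
      | none => g ∈ C
      | some p => ∃ a b, Beh E₀ F₀ p a ∧ b ∈ C ∧ a * b = g := by
    intro p g h
    induction h with
    | @halt p g h =>
      cases p with
      | none => exact (show g = 1 from h) ▸ C.one_mem
      | some p => exact h.elim
    | @step p q a g h _ ih =>
      rcases p with _ | p <;> rcases q with _ | q
      · exact h.elim
      · obtain ⟨rfl, rfl⟩ := h
        obtain ⟨x, y, hx, hy, rfl⟩ := ih
        simpa using C.mul_mem (Submonoid.subset_closure hx) hy
      · exact ⟨a, g, .halt h, ih, rfl⟩
      · obtain ⟨x, y, hx, hy, rfl⟩ := ih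
        exact ⟨a * x, y, .step h hx, hy, mul_assoc _ _ _⟩
  have h₂ : ∀ p a b, Beh E₀ F₀ p a → Beh E F none b → Beh E F (some p) (a * b) := by
    intro p a b ha hb
    induction ha with
    | halt h => exact .step (q := none) h hb
    | @step p q x y h _ ih =>
      rw [mul_assoc]
      exact .step (q := some q) h ih
  refine ⟨Option Q, inferInstance, E, F, none, ?_, ?_, ?_⟩
  · rintro (_ | p) (_ | q)
    exacts [Set.finite_empty, (Set.finite_singleton (1 : G)).subset fun _ h => h.1, hF p, hE _ _]
  · rintro (_ | p)
    exacts [Set.finite_singleton _, Set.finite_empty]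
  · ext g
    refine ⟨fun hg => ?_, fun hg => h₁ none g hg⟩
    refine Submonoid.closure_induction_left (motive := fun g _ => Beh E F none g) ?_ ?_ hg
    · exact .halt rfl
    · intro x hx y _ hy
      simpa using Beh.step (E := E) (F := F) (p := none) (q := some p₀) (a := 1) ⟨rfl, rfl⟩
        (h₂ _ _ _ hx hy)

/-- Regular languages evaluate to rational sets, whatever the values of the letters. -/
theorem of_isRegular {X : Type} [Finite X] (f : X → G) {L : Language X} (hL : L.IsRegular) :
    IsRational {g | ∃ w ∈ L, (w.map f).prod = g} := by
  obtain ⟨Q, _, D, rfl⟩ := hL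
  let E : Q → Q → Set G := fun p q => {a | ∃ x, D.step p x = q ∧ f x = a}
  let F : Q → Set G := fun p => {a | p ∈ D.accept ∧ a = 1}
  refine ⟨Q, inferInstance, E, F, D.start, ?_, ?_, ?_⟩
  · exact fun p q => (Set.finite_range f).subset fun a ⟨x, _, h⟩ => ⟨x, h⟩
  · exact fun p => (Set.finite_singleton (1 : G)).subset fun _ h => h.2
  · ext g
    constructor
    · rintro ⟨w, hw, rfl⟩
      suffices ∀ (w : List X) (p : Q), D.evalFrom p w ∈ D.accept → Beh E F p (w.map f).prod from
        this w _ hw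
      intro w
      induction w with
      | nil => exact fun p hp => .halt ⟨hp, rfl⟩
      | cons x w ih =>
        intro p hp
        rw [List.map_cons, List.prod_cons]
        exact .step ⟨x, rfl, rfl⟩ (ih _ hp)
    · suffices ∀ p, Beh E F p g → ∃ w : List X, D.evalFrom p w ∈ D.accept ∧ (w.map f).prod = g from
        fun h => this _ h
      intro p h
      induction h with
      | halt h => exact ⟨[], h.1, h.2.symm⟩
      | step h _ ih =>
        obtain ⟨x, rfl, rfl⟩ := h
        obtain ⟨w, hw, rfl⟩ := ih
        exact ⟨x :: w, hw, by simp⟩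

end IsRational

/-- Over an alphabet consisting of a generating set and of the labels of an automaton, the runs of
the automaton form a regular language. -/
theorem IsRational.hasRegularConeEval {G : Type*} [Group G] [Monoid.FG G] {S : Set G}
    (hS : IsRational S) : HasRegularConeEval S := by
  obtain ⟨Y, hY, φ, hφ⟩ := (Monoid.fg_iff_exists_freeGroup_hom_surjective_finite).1 ‹_›
  obtain ⟨Q, _, E, F, p₀, hE, hF, rfl⟩ := hS
  obtain ⟨n, lab, hlab⟩ : ∃ (n : ℕ) (lab : Fin n → G),
      Set.range lab = (⋃ p, ⋃ q, E p q) ∪ ⋃ p, F p := by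
    have hfin : ((⋃ p, ⋃ q, E p q) ∪ ⋃ p, F p).Finite :=
      (Set.finite_iUnion fun p => Set.finite_iUnion fun q => hE p q).union (Set.finite_iUnion hF)
    obtain ⟨n, f, hf⟩ := hfin.fin_embedding
    exact ⟨n, f, hf⟩
  let π : FreeMonoid (Y ⊕ Fin n) →* G :=
    FreeMonoid.lift (Sum.elim (fun y => φ (FreeMonoid.of y)) lab)
  have hπ : Function.Surjective π := by
    have : π.comp (FreeMonoid.map Sum.inl) = φ := FreeMonoid.hom_eq fun y => by simp [π]
    intro g
    obtain ⟨w, rfl⟩ := hφ g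
    exact ⟨FreeMonoid.map Sum.inl w, DFunLike.congr_fun this w⟩
  let N : NFA (Y ⊕ Fin n) (Option Q) :=
    { step := fun s x => match s, x with
        | some p, .inr i => {t | match t with
            | some q => lab i ∈ E p q
            | none => lab i ∈ F p}
        | _, _ => ∅
      start := {some p₀}
      accept := {none} }
  have hnone : ∀ w, none ∈ N.evalFrom {none} w → w = [] := by
    rintro (_ | ⟨x, w⟩) h
    · rfl
    · rw [NFA.evalFrom_cons, NFA.stepSet_singleton, show N.step none x = ∅ from rfl,
        NFA.mem_evalFrom_iff_exists] at h
      obtain ⟨t, ht, _⟩ := h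
      exact ht.elim
  refine ⟨Y ⊕ Fin n, Fintype.ofFinite _, π, hπ, N.accepts,
    ⟨Set (Option Q), Fintype.ofFinite _, N.toDFA, N.toDFA_correct⟩, ?_⟩
  ext g
  constructor
  · rintro ⟨w, ⟨s, hs, hw⟩, rfl⟩
    obtain rfl : s = none := hs
    suffices ∀ (w : List (Y ⊕ Fin n)) (p : Q), none ∈ N.evalFrom {some p} w →
        Beh E F p (π (FreeMonoid.ofList w)) from this w _ hw
    intro w
    induction w with
    | nil => intro p h; simp at h
    | cons x w ih =>
      intro p h
      rw [NFA.evalFrom_cons, NFA.stepSet_singleton, NFA.mem_evalFrom_iff_exists] at h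
      obtain ⟨t, ht, h⟩ := h
      rcases x with y | i
      · exact ht.elim
      · rw [FreeMonoid.ofList_cons, map_mul, show π (FreeMonoid.of (Sum.inr i)) = lab i by simp [π]]
        rcases t with _ | q
        · obtain rfl := hnone w h
          rw [FreeMonoid.ofList_nil, map_one, mul_one]
          exact .halt ht
        · exact .step ht (ih q h)
  · suffices ∀ p, Beh E F p g → ∃ w : List (Y ⊕ Fin n), none ∈ N.evalFrom {some p} w ∧
        π (FreeMonoid.ofList w) = g by
      intro h
      obtain ⟨w, hw, rfl⟩ := this _ h
      exact ⟨w, ⟨none, rfl, hw⟩, rfl⟩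
    intro p h
    induction h with
    | @halt p g h =>
      obtain ⟨i, rfl⟩ : g ∈ Set.range lab := hlab ▸ .inr (Set.mem_iUnion.2 ⟨p, h⟩)
      refine ⟨[.inr i], ?_, by simp [π]⟩
      rw [NFA.evalFrom_singleton, NFA.stepSet_singleton]
      exact h
    | @step p q a g h _ ih =>
      obtain ⟨i, rfl⟩ : a ∈ Set.range lab :=
        hlab ▸ .inl (Set.mem_iUnion.2 ⟨p, Set.mem_iUnion.2 ⟨q, h⟩⟩)
      obtain ⟨w, hw, rfl⟩ := ih
      refine ⟨.inr i :: w, ?_, by simp [π, FreeMonoid.ofList_cons]⟩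
      rw [NFA.evalFrom_cons, NFA.stepSet_singleton, NFA.mem_evalFrom_iff_exists]
      exact ⟨some q, h, hw⟩

namespace HasRegularConeEval

variable {G : Type*} [Group G] {S : Set G}

theorem monoid_fg (h : HasRegularConeEval S) : Monoid.FG G := by
  obtain ⟨X, _, π, hπ, _⟩ := h
  exact Monoid.fg_of_surjective π hπ

theorem isRational_image {H : Type*} [Monoid H] (h : HasRegularConeEval S) (φ : G →* H) :
    IsRational (φ '' S) := by
  obtain ⟨X, _, π, -, L, hL, rfl⟩ := h
  convert IsRational.of_isRegular (fun x => φ (π (FreeMonoid.of x))) hL using 1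
  have key : ∀ w : List X, φ (π (FreeMonoid.ofList w)) =
      (w.map fun x => φ (π (FreeMonoid.of x))).prod := by
    intro w
    induction w with
    | nil => simp
    | cons x w ih => simp_all [FreeMonoid.ofList_cons]
  ext g
  constructor
  · rintro ⟨_, ⟨w, hw, rfl⟩, rfl⟩
    exact ⟨w, hw, (key w).symm⟩
  · rintro ⟨w, hw, rfl⟩
    exact ⟨_, ⟨w, hw, rfl⟩, key w⟩

/-- The set of inverses is the evaluation of the reversed language under `x ↦ (π x)⁻¹`. -/
theorem isRational_image_inv {H : Type*} [Group H] (h : HasRegularConeEval S) (φ : G →* H) :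
    IsRational ((fun g => φ g⁻¹) '' S) := by
  obtain ⟨X, _, π, -, L, hL, rfl⟩ := h
  convert IsRational.of_isRegular (fun x => (φ (π (FreeMonoid.of x)))⁻¹) hL.reverse using 1
  have key : ∀ w : List X, φ (π (FreeMonoid.ofList w))⁻¹ =
      (w.reverse.map fun x => (φ (π (FreeMonoid.of x)))⁻¹).prod := by
    intro w
    induction w with
    | nil => simp
    | cons x w ih => simp_all [FreeMonoid.ofList_cons]
  ext g
  constructor
  · rintro ⟨_, ⟨w, hw, rfl⟩, rfl⟩
    refine ⟨w.reverse, ?_, (key w).symm⟩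
    rwa [Language.mem_reverse, List.reverse_reverse]
  · rintro ⟨w, hw, rfl⟩
    exact ⟨_, ⟨w.reverse, hw, rfl⟩, by simpa using key w.reverse⟩

end HasRegularConeEval

/-! ### Reduced words in a free product of two groups -/

namespace FreeProd

open Monoid

variable {M : Bool → Type*} [∀ i, Group (M i)]

set_option linter.unusedSectionVars false

/-- A word is reduced if its syllables are nontrivial and come from the two factors in turn. -/
def IsRed (l : List (Σ i, M i)) : Prop :=
  (∀ x ∈ l, x.2 ≠ 1) ∧ l.IsChain fun x y => x.1 ≠ y.1

/-- The element of the free product represented by a word. -/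
def ev (l : List (Σ i, M i)) : CoprodI M :=
  (l.map fun x => CoprodI.of x.2).prod

theorem isRed_cons {x : Σ i, M i} {l : List (Σ i, M i)} :
    IsRed (x :: l) ↔ x.2 ≠ 1 ∧ (∀ y ∈ l.head?, x.1 ≠ y.1) ∧ IsRed l := by
  simp only [IsRed, List.isChain_cons, List.forall_mem_cons]
  tauto

theorem isRed_append {u v : List (Σ i, M i)} :
    IsRed (u ++ v) ↔ IsRed u ∧ IsRed v ∧ ∀ x ∈ u.getLast?, ∀ y ∈ v.head?, x.1 ≠ y.1 := by
  simp only [IsRed, List.isChain_append, List.forall_mem_append]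
  tauto

theorem isRed_nil : IsRed ([] : List (Σ i, M i)) := by simp [IsRed]

theorem exists_isRed (g : CoprodI M) : ∃ l, IsRed l ∧ ev l = g := by
  classical
  exact ⟨(CoprodI.Word.equiv g).toList, ⟨(CoprodI.Word.equiv g).ne_one,
    (CoprodI.Word.equiv g).chain_ne⟩, CoprodI.Word.equiv.symm_apply_apply g⟩

/-! ### The Dicks–Šunić quasimorphism -/

/-- The numerical value of the index of a factor, so that an index jump contributes
`β j - β i`. -/
def β (i : Bool) : ℤ := if i then 1 else 0

/-- `β` of the index of a syllable, with value `0` when there is no syllable. -/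
def βo (o : Option (Σ i, M i)) : ℤ := o.elim 0 fun x => β x.1

open Classical in
/-- The sign of a syllable with respect to the positive cones of the factors. -/
noncomputable def sgn (P : ∀ i, Set (M i)) (x : Σ i, M i) : ℤ := if x.2 ∈ P x.1 then 1 else -1

/-- The value of the Dicks–Šunić quasimorphism on a reduced word: positive syllables minus negative
syllables, plus index jumps minus index drops. The last two telescope to the difference of the
indices of the last and of the first syllable. -/
noncomputable def tau (P : ∀ i, Set (M i)) (l : List (Σ i, M i)) : ℤ :=
  (l.map (sgn P)).sum + βo l.getLast? - βo l.head?

open Classical in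
/-- The Dicks–Šunić quasimorphism on the free product, computed on normal forms. -/
noncomputable def T (P : ∀ i, Set (M i)) (g : CoprodI M) : ℤ :=
  tau P (CoprodI.Word.equiv g).toList

variable {P : ∀ i, Set (M i)}

theorem T_ev {l : List (Σ i, M i)} (hl : IsRed l) : T P (ev l) = tau P l := by
  classical
  exact congrArg (fun w : CoprodI.Word M => tau P w.toList)
    (CoprodI.Word.equiv.apply_symm_apply (⟨l, hl.1, hl.2⟩ : CoprodI.Word M))

theorem T_one : T P (1 : CoprodI M) = 0 := by
  simpa [ev, tau, βo] using T_ev (P := P) isRed_nil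

theorem β_ne {i j : Bool} (h : i ≠ j) : β i + β j = 1 := by
  cases i <;> cases j <;> simp_all [β]

theorem β_cases (i : Bool) : β i = 0 ∨ β i = 1 := by
  cases i <;> simp [β]

theorem sgn_cases (x : Σ i, M i) : sgn P x = 1 ∨ sgn P x = -1 := by
  unfold sgn
  split_ifs <;> simp

theorem tau_singleton (x : Σ i, M i) : tau P [x] = sgn P x := by
  simp [tau, βo]

theorem tau_cons_cons (x y : Σ i, M i) (l : List (Σ i, M i)) :
    tau P (x :: y :: l) = sgn P x + β y.1 - β x.1 + tau P (y :: l) := by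
  simp only [tau, βo, List.map_cons, List.sum_cons, List.getLast?_cons_cons, List.head?_cons,
    Option.elim_some]
  ring

/-- A reduced word with `n ≥ 1` syllables has `n - 1` index jumps and drops. -/
theorem odd_tau : ∀ {l : List (Σ i, M i)}, IsRed l → l ≠ [] → Odd (tau P l)
  | [], _, h => absurd rfl h
  | [x], _, _ => by
    rw [tau_singleton]
    rcases sgn_cases (P := P) x with h | h <;> rw [h] <;> decide
  | x :: y :: l, h, _ => by
    obtain ⟨-, h₁, h₂⟩ := isRed_cons.1 h
    obtain ⟨k, hk⟩ := odd_tau h₂ (by simp)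
    have hβ := β_ne (h₁ y rfl)
    rw [tau_cons_cons, hk]
    rcases sgn_cases (P := P) x with h | h <;> rw [h]
    · exact ⟨k + 1 - β x.1, by linarith⟩
    · exact ⟨k - β x.1, by linarith⟩

theorem sgn_mul (hP : ∀ i, IsPositiveCone (P i)) {i : Bool} {a b : M i} (ha : a ≠ 1) (hb : b ≠ 1) :
    |sgn P ⟨i, a * b⟩ - sgn P ⟨i, a⟩ - sgn P ⟨i, b⟩| ≤ 1 := by
  obtain ⟨hmul, htot, -, -⟩ := hP i
  by_cases h₁ : a ∈ P i <;> by_cases h₂ : b ∈ P i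
  · simp [sgn, h₁, h₂, hmul a h₁ b h₂]
  · rcases sgn_cases (P := P) ⟨i, a * b⟩ with h | h <;> rw [h] <;> simp [sgn, h₁, h₂]
  · rcases sgn_cases (P := P) ⟨i, a * b⟩ with h | h <;> rw [h] <;> simp [sgn, h₁, h₂]
  · have h₁' : a⁻¹ ∈ P i := by have := htot a; tauto
    have h₂' : b⁻¹ ∈ P i := by have := htot b; tauto
    have : a * b ∉ P i := by
      intro h
      -- `b⁻¹ * a⁻¹` is positive as well, hence so is `1`
      have h3 := hmul _ h _ (hmul _ h₂' _ h₁')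
      rw [← mul_inv_rev, mul_inv_cancel] at h3
      exact (hP i).2.2.2 h3
    simp [sgn, h₁, h₂, this]

/-- The quasimorphism inequality, by induction on the number of syllables which cancel. When the
syllables `a` and `a⁻¹` cancel, the two index changes next to them cancel as well. -/
theorem abs_T_sub_le (hP : ∀ i, IsPositiveCone (P i)) (u v : List (Σ i, M i)) (hu : IsRed u)
    (hv : IsRed v) : |T P (ev u * ev v) - tau P u - tau P v| ≤ 1 := by
  induction u using List.reverseRecOn generalizing v with
  | nil =>
    have h1 : ev ([] : List (Σ i, M i)) * ev v = ev v := by simp [ev]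
    rw [h1, T_ev hv]
    simp [tau, βo]
  | append_singleton u x ih =>
    obtain ⟨hu₁, hx, hux⟩ := isRed_append.1 hu
    rcases v with _ | ⟨y, v⟩
    · have h1 : ev (u ++ [x]) * ev ([] : List (Σ i, M i)) = ev (u ++ [x]) := by simp [ev]
      rw [h1, T_ev hu]
      simp [tau, βo]
    obtain ⟨hy, hyv, hv₁⟩ := isRed_cons.1 hv
    by_cases hxy : x.1 = y.1
    · obtain ⟨i, a⟩ := x
      obtain ⟨j, b⟩ := y
      obtain rfl : i = j := hxy
      have ha : a ≠ 1 := (isRed_cons.1 hx).1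
      have hb : b ≠ 1 := hy
      by_cases hab : a * b = 1
      · have he : ev (u ++ [⟨i, a⟩]) * ev (⟨i, b⟩ :: v) = ev u * ev v := by
          simp only [ev, List.map_append, List.prod_append, List.map_cons, List.prod_cons,
            List.map_nil, List.prod_nil, mul_one]
          rw [mul_assoc, ← mul_assoc (CoprodI.of a), ← map_mul, hab, map_one, one_mul]
        have hs : sgn P ⟨i, a⟩ + sgn P ⟨i, b⟩ = 0 := by
          obtain rfl : b = a⁻¹ := (inv_eq_of_mul_eq_one_right hab).symm
          have h₁ := (hP i).2.1 a
          have h₂ := (hP i).2.2.1 a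
          by_cases h : a ∈ P i
          · simp [sgn, h, h₂ h]
          · have : a⁻¹ ∈ P i := by tauto
            simp [sgn, h, this]
        rw [he]
        rcases List.eq_nil_or_concat u with rfl | ⟨u, z, rfl⟩
        · have h1 : ev ([] : List (Σ i, M i)) * ev v = ev v := by simp [ev]
          rw [h1, T_ev hv₁, List.nil_append, tau_singleton]
          rcases v with _ | ⟨w, v⟩
          · rw [tau_singleton]
            simp only [tau, βo, List.map_nil, List.sum_nil, List.getLast?_nil, List.head?_nil,
              Option.elim_none, abs_le]
            constructor <;> linarith
          · have := β_ne (hyv w rfl)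
            rw [tau_cons_cons, abs_le]
            simp only at this ⊢
            rcases β_cases i with h | h <;> constructor <;> linarith
        · rw [List.concat_eq_append] at *
          have hz : β z.1 + β i = 1 := β_ne (hux z (by simp) _ rfl)
          rcases v with _ | ⟨w, v⟩
          · have h1 : ev (u ++ [z]) * ev ([] : List (Σ i, M i)) = ev (u ++ [z]) := by simp [ev]
            rw [h1, T_ev hu₁, tau_singleton]
            have : tau P (u ++ [z] ++ [⟨i, a⟩]) =
                tau P (u ++ [z]) + sgn P ⟨i, a⟩ + β i - β z.1 := by
              simp [tau, βo]
              ring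
            rw [this, abs_le]
            rcases β_cases i with h | h <;> constructor <;> linarith
          · have hw := β_ne (hyv w rfl)
            simp only at hw
            have h1 := ih (w :: v) hu₁ hv₁
            have : tau P (u ++ [z] ++ [⟨i, a⟩]) =
                tau P (u ++ [z]) + sgn P ⟨i, a⟩ + β i - β z.1 := by
              simp [tau, βo]
              ring
            rw [this, tau_cons_cons]
            convert h1 using 2
            simp only
            linarith
      · have he : ev (u ++ [⟨i, a⟩]) * ev (⟨i, b⟩ :: v) = ev (u ++ ⟨i, a * b⟩ :: v) := by
          simp [ev, mul_assoc]
        have hr : IsRed (u ++ ⟨i, a * b⟩ :: v) :=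
          isRed_append.2 ⟨hu₁, isRed_cons.2 ⟨hab, hyv, hv₁⟩, by simpa using hux⟩
        rw [he, T_ev hr]
        have h1 : (u ++ [(⟨i, a⟩ : Σ i, M i)]).head?.elim 0 (fun x => β x.1) =
            (u ++ ⟨i, a * b⟩ :: v).head?.elim 0 (fun x => β x.1) := by
          cases u <;> simp
        have h2 : ((⟨i, b⟩ : Σ i, M i) :: v).getLast?.elim 0 (fun x => β x.1) =
            (u ++ ⟨i, a * b⟩ :: v).getLast?.elim 0 (fun x => β x.1) := by
          rcases List.eq_nil_or_concat v with rfl | ⟨v, z, rfl⟩ <;>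
            simp [List.getLast?_append, List.getLast?_cons]
        convert sgn_mul hP ha hb using 2
        simp only [tau, βo, h1, h2]
        simp
        ring
    · have he : ev (u ++ [x]) * ev (y :: v) = ev (u ++ [x] ++ y :: v) := by simp [ev, mul_assoc]
      have hr : IsRed (u ++ [x] ++ y :: v) :=
        isRed_append.2 ⟨hu, hv, by simpa using hxy⟩
      have h1 : (u ++ [x]).head?.elim 0 (fun x => β x.1) =
          (u ++ [x] ++ y :: v).head?.elim 0 (fun x => β x.1) := by
        cases u <;> simp
      have h2 : (y :: v).getLast?.elim 0 (fun x => β x.1) =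
          (u ++ [x] ++ y :: v).getLast?.elim 0 (fun x => β x.1) := by
        rw [List.getLast?_append_of_ne_nil _ (List.cons_ne_nil y v)]
      have h3 : tau P (u ++ [x] ++ y :: v) - tau P (u ++ [x]) - tau P (y :: v) =
          β y.1 - β x.1 := by
        simp only [tau, βo, h1, h2]
        simp
        ring
      rw [he, T_ev hr, h3, abs_le]
      rcases β_cases x.1 with h | h <;> rcases β_cases y.1 with h' | h' <;> rw [h, h'] <;> simp

/-- The positive cone of the direct product of the free product with `ℤ`: the pairs `(g, n)` with
`2 * n + T g > 0`. -/
def cone (P : ∀ i, Set (M i)) : Set (CoprodI M × Multiplicative ℤ) :=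
  {x | 0 < 2 * x.2.toAdd + T P x.1}

theorem abs_T_mul_le (hP : ∀ i, IsPositiveCone (P i)) (g h : CoprodI M) :
    |T P (g * h) - T P g - T P h| ≤ 1 := by
  obtain ⟨u, hu, rfl⟩ := exists_isRed g
  obtain ⟨v, hv, rfl⟩ := exists_isRed h
  rw [T_ev hu, T_ev hv]
  exact abs_T_sub_le hP u v hu hv

theorem odd_T {g : CoprodI M} (hg : g ≠ 1) : Odd (T P g) := by
  obtain ⟨u, hu, rfl⟩ := exists_isRed g
  rw [T_ev hu]
  exact odd_tau hu (by rintro rfl; simp [ev] at hg)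

theorem T_inv (hP : ∀ i, IsPositiveCone (P i)) (g : CoprodI M) : T P g⁻¹ = -T P g := by
  by_cases hg : g = 1
  · simp [hg, T_one]
  -- the sum of these odd numbers has absolute value at most `1`
  · obtain ⟨a, ha⟩ := odd_T (P := P) hg
    obtain ⟨b, hb⟩ := odd_T (P := P) (inv_ne_one.2 hg)
    have := abs_le.1 (abs_T_mul_le hP g g⁻¹)
    rw [mul_inv_cancel, T_one] at this
    omega

theorem isPositiveCone_cone (hP : ∀ i, IsPositiveCone (P i)) : IsPositiveCone (cone P) := by
  have hmul : ∀ a ∈ cone P, ∀ b ∈ cone P, a * b ∈ cone P := by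
    rintro ⟨g, m⟩ hg ⟨h, n⟩ hh
    have := abs_le.1 (abs_T_mul_le hP g h)
    simp only [cone, Set.mem_ofPred_eq, Prod.mk_mul_mk, toAdd_mul] at hg hh ⊢
    omega
  have hone : (1 : CoprodI M × Multiplicative ℤ) ∉ cone P := by simp [cone, T_one]
  refine ⟨hmul, ?_, fun g hg hg' => hone (by simpa using hmul g hg _ hg'), hone⟩
  rintro ⟨g, n⟩
  simp only [cone, Set.mem_ofPred_eq, Prod.inv_mk, toAdd_inv, T_inv hP, Prod.mk_eq_one]
  by_cases hg : g = 1
  · subst hg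
    rw [← toAdd_eq_zero (x := n), T_one]
    simp only [true_and]
    omega
  · obtain ⟨a, ha⟩ := odd_T (P := P) hg
    omega

/-! ### Rationality of the positive cone -/

open Classical in
/-- The exponent of the central generator which is read together with a syllable: by `two_mul_kap`,
`2 * kap` cancels the sign of the syllable and, summed along a word, the index changes. -/
noncomputable def kap (P : ∀ i, Set (M i)) (x : Σ i, M i) : ℤ :=
  if x.2 ∈ P x.1 then -β x.1 else 1 - β x.1

theorem two_mul_kap (x : Σ i, M i) : 2 * kap P x = 1 - 2 * β x.1 - sgn P x := by
  unfold kap sgn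
  split_ifs <;> ring

/-- A syllable together with its central correction `kap`. -/
noncomputable def syl (P : ∀ i, Set (M i)) (x : Σ i, M i) : CoprodI M × Multiplicative ℤ :=
  (CoprodI.of x.2, .ofAdd (kap P x))

/-- The product of the corrected syllables of a word. -/
noncomputable def wrd (P : ∀ i, Set (M i)) (l : List (Σ i, M i)) : CoprodI M × Multiplicative ℤ :=
  (l.map (syl P)).prod

theorem wrd_eq (l : List (Σ i, M i)) : wrd P l = (ev l, .ofAdd (l.map (kap P)).sum) := by
  induction l with
  | nil => rfl
  | cons x l ih => simp_all [wrd, ev, syl]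

/-- The central corrections compensate the quasimorphism up to a quantity which depends only on the
factor of the first syllable. -/
theorem two_mul_sum_kap : ∀ {l : List (Σ i, M i)}, IsRed l → ∀ x ∈ l.head?,
    2 * (l.map (kap P)).sum + tau P l = 1 - 2 * β x.1
  | [], _, _, h => by simp at h
  | [y], _, x, h => by
    obtain rfl : y = x := by simpa using h
    rw [tau_singleton]
    simp [two_mul_kap]
  | y :: z :: l, hl, x, h => by
    obtain rfl : y = x := by simpa using h
    obtain ⟨-, h₁, h₂⟩ := isRed_cons.1 hl
    have ih := two_mul_sum_kap h₂ z rfl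
    have := β_ne (h₁ z rfl)
    rw [tau_cons_cons, List.map_cons, List.sum_cons]
    linarith [two_mul_kap (P := P) y]

/-- The generator of the central factor. -/
def zgen : CoprodI M × Multiplicative ℤ := (1, .ofAdd 1)

theorem zgen_pow_mul (k : ℕ) (g : CoprodI M) (n : ℤ) :
    zgen ^ k * (g, Multiplicative.ofAdd n) = (g, .ofAdd (k + n)) := by
  simp [zgen, ← ofAdd_nsmul, ← ofAdd_add]

theorem zgen_pow_mem (k : ℕ) : (zgen : CoprodI M × Multiplicative ℤ) ^ k ∈
    (Submonoid.closure {(zgen : CoprodI M × Multiplicative ℤ)} : Set _) :=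
  pow_mem (Submonoid.subset_closure (Set.mem_singleton _)) k

/-- The corrected nontrivial syllables of the factor `i`. -/
def syls (P : ∀ i, Set (M i)) (i : Bool) : Set (CoprodI M × Multiplicative ℤ) :=
  {y | ∃ a : M i, a ≠ 1 ∧ syl P ⟨i, a⟩ = y}

/-- The corrected reduced words which are empty or start in the factor `true`. -/
def wrds (P : ∀ i, Set (M i)) : Set (CoprodI M × Multiplicative ℤ) :=
  {y | ∃ l, IsRed l ∧ (∀ x ∈ l.head?, x.1 = true) ∧ wrd P l = y}

open Pointwise

theorem mem_of_isRed : ∀ {l : List (Σ i, M i)}, IsRed l → (∀ x ∈ l.head?, x.1 = true) →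
    wrd P l ∈ (Submonoid.closure (syls P true * syls P false) : Set _) * ({1} ∪ syls P true)
  | [], _, _ => ⟨1, Submonoid.one_mem _, 1, .inl rfl, by simp [wrd]⟩
  | [⟨i, a⟩], h, hx => by
    obtain rfl : i = true := hx _ rfl
    exact ⟨1, Submonoid.one_mem _, _, .inr ⟨a, (isRed_cons.1 h).1, rfl⟩, by simp [wrd]⟩
  | ⟨i, a⟩ :: ⟨j, b⟩ :: l, h, hx => by
    obtain rfl : i = true := hx _ rfl
    obtain ⟨ha, hij, h⟩ := isRed_cons.1 h
    obtain ⟨hb, hjl, hl⟩ := isRed_cons.1 h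
    obtain rfl : j = false := by simpa using (hij _ rfl).symm
    obtain ⟨d, hd, e, he, hde⟩ := mem_of_isRed hl fun x hx => by simpa using (hjl x hx).symm
    refine ⟨_, Submonoid.mul_mem _ (Submonoid.subset_closure
      (Set.mul_mem_mul ⟨a, ha, rfl⟩ ⟨b, hb, rfl⟩)) hd, e, he, ?_⟩
    simp only [wrd, List.map_cons, List.prod_cons] at hde ⊢
    rw [← hde]
    simp only [mul_assoc]

theorem wrds_eq : wrds P =
    (Submonoid.closure (syls P true * syls P false) : Set _) * ({1} ∪ syls P true) := by
  apply Set.Subset.antisymm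
  · rintro _ ⟨l, h, hx, rfl⟩
    exact mem_of_isRed h hx
  · rintro _ ⟨d, hd, e, he, rfl⟩
    refine Submonoid.closure_induction_left (motive := fun d _ => d * e ∈ wrds P) ?_ ?_ hd
    · rcases he with rfl | ⟨a, ha, rfl⟩
      · exact ⟨[], isRed_nil, by simp, by simp [wrd]⟩
      · exact ⟨[⟨true, a⟩], isRed_cons.2 ⟨ha, by simp, isRed_nil⟩, by simp, by simp [wrd]⟩
    · rintro _ ⟨_, ⟨a, ha, rfl⟩, _, ⟨b, hb, rfl⟩, rfl⟩ y _ ⟨l, hl, hx, hy⟩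
      refine ⟨⟨true, a⟩ :: ⟨false, b⟩ :: l, ?_, by simp, ?_⟩
      · exact isRed_cons.2 ⟨ha, by simp, isRed_cons.2 ⟨hb, fun x hx' => by simp [hx x hx'], hl⟩⟩
      · simp only [mul_assoc, ← hy]
        simp [wrd]

/-- By `two_mul_sum_kap` a corrected word starting in the factor `false` is positive, whereas the
other corrected words have to be multiplied by the central generator first. Any further power of it
keeps them positive. -/
theorem cone_eq : cone P =
    (Submonoid.closure {(zgen : CoprodI M × Multiplicative ℤ)} : Set _) *
      (({zgen} ∪ syls P false) * wrds P) := by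
  ext y
  constructor
  · obtain ⟨g, n⟩ := y
    obtain ⟨l, hl, rfl⟩ := exists_isRed g
    intro hy
    simp only [cone, Set.mem_ofPred_eq, T_ev hl] at hy
    obtain ⟨n, rfl⟩ := Multiplicative.ofAdd.surjective n
    rw [toAdd_ofAdd] at hy
    by_cases hx : ∀ x ∈ l.head?, x.1 = true
    · obtain ⟨k, hk⟩ : ∃ k : ℕ, n = k + 1 + (l.map (kap P)).sum := by
        have : 0 ≤ n - 1 - (l.map (kap P)).sum := by
          rcases l with _ | ⟨x, l⟩
          · simp [tau, βo] at hy ⊢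
            omega
          · have h1 := two_mul_sum_kap (P := P) hl x rfl
            rw [hx x rfl] at h1
            simp only [β, if_true] at h1
            omega
        exact ⟨_, by rw [Int.toNat_of_nonneg this]; ring⟩
      have hz : zgen * wrd P l ∈ ({zgen} ∪ syls P false) * wrds P :=
        Set.mul_mem_mul (.inl (Set.mem_singleton _)) ⟨l, hl, hx, rfl⟩
      refine ⟨zgen ^ k, zgen_pow_mem k, _, hz, ?_⟩
      simp only [wrd_eq]
      rw [← mul_assoc, ← pow_succ, zgen_pow_mul, hk]
      push_cast
      rfl
    · rcases l with _ | ⟨⟨i, a⟩, l⟩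
      · simp at hx
      obtain rfl : i = false := by simpa using hx
      have h1 := two_mul_sum_kap (P := P) hl _ rfl
      obtain ⟨ha, hal, hl'⟩ := isRed_cons.1 hl
      obtain ⟨k, hk⟩ : ∃ k : ℕ, n = k + ((⟨false, a⟩ :: l).map (kap P)).sum := by
        have : 0 ≤ n - ((⟨false, a⟩ :: l).map (kap P)).sum := by
          rw [show β (⟨false, a⟩ : Σ i, M i).1 = 0 from rfl] at h1
          omega
        exact ⟨_, by rw [Int.toNat_of_nonneg this]; ring⟩
      have hz : syl P ⟨false, a⟩ * wrd P l ∈ ({zgen} ∪ syls P false) * wrds P :=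
        Set.mul_mem_mul (.inr ⟨a, ha, rfl⟩)
          ⟨l, hl', fun x hx => by simpa using (hal x hx).symm, rfl⟩
      refine ⟨zgen ^ k, zgen_pow_mem k, _, hz, ?_⟩
      have h2 : syl P ⟨false, a⟩ * wrd P l = wrd P (⟨false, a⟩ :: l) := by simp [wrd]
      simp only [h2]
      rw [wrd_eq, zgen_pow_mul, hk]
  · rintro ⟨z, hz, _, ⟨y, hy, _, ⟨l, hl, hx, rfl⟩, rfl⟩, rfl⟩
    obtain ⟨k, rfl⟩ := Submonoid.mem_closure_singleton.1 hz
    rcases hy with rfl | ⟨a, ha, rfl⟩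
    · simp only [wrd_eq]
      rw [← mul_assoc, ← pow_succ, zgen_pow_mul]
      simp only [cone, Set.mem_ofPred_eq, T_ev hl, toAdd_ofAdd]
      rcases l with _ | ⟨x, l⟩
      · simp [tau, βo]
      · have h1 := two_mul_sum_kap (P := P) hl x rfl
        rw [hx x rfl] at h1
        simp only [β, if_true] at h1
        push_cast
        omega
    · have hr : IsRed (⟨false, a⟩ :: l) :=
        isRed_cons.2 ⟨ha, fun x hx' => by simp [hx x hx'], hl⟩
      have h1 := two_mul_sum_kap (P := P) hr _ rfl
      have h2 : syl P ⟨false, a⟩ * wrd P l = wrd P (⟨false, a⟩ :: l) := by simp [wrd]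
      simp only [h2]
      rw [wrd_eq, zgen_pow_mul]
      simp only [cone, Set.mem_ofPred_eq, T_ev hr, toAdd_ofAdd]
      rw [show β (⟨false, a⟩ : Σ i, M i).1 = 0 from rfl] at h1
      linarith [Int.natCast_nonneg k]

theorem isRational_syls (hP : ∀ i, IsPositiveCone (P i)) (hR : ∀ i, HasRegularConeEval (P i))
    (i : Bool) : IsRational (syls P i) := by
  let φ : M i →* CoprodI M × Multiplicative ℤ := (MonoidHom.inl _ _).comp CoprodI.of
  have : syls P i = φ '' P i * {(1, .ofAdd (-β i))} ∪
      (fun g => φ g⁻¹) '' P i * {(1, .ofAdd (1 - β i))} := by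
    rw [Set.mul_singleton, Set.mul_singleton, Set.image_image, Set.image_image]
    obtain ⟨-, htot, hasym, hone⟩ := hP i
    ext y
    constructor
    · rintro ⟨a, ha, rfl⟩
      by_cases h : a ∈ P i
      · exact .inl ⟨a, h, by simp [φ, syl, kap, h]⟩
      · have h' : a⁻¹ ∈ P i := by have := htot a; tauto
        exact .inr ⟨a⁻¹, h', by simp [φ, syl, kap, h]⟩
    · rintro (⟨a, ha, rfl⟩ | ⟨a, ha, rfl⟩)
      · exact ⟨a, ne_of_mem_of_not_mem ha hone, by simp [φ, syl, kap, ha]⟩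
      · exact ⟨a⁻¹, inv_ne_one.2 (ne_of_mem_of_not_mem ha hone),
          by simp [φ, syl, kap, hasym a ha]⟩
  rw [this]
  exact (((hR i).isRational_image φ).mul (.singleton _)).union
    (((hR i).isRational_image_inv φ).mul (.singleton _))

theorem isRational_cone (hP : ∀ i, IsPositiveCone (P i)) (hR : ∀ i, HasRegularConeEval (P i)) :
    IsRational (cone P) := by
  have h := isRational_syls hP hR
  rw [cone_eq, wrds_eq]
  exact (IsRational.singleton _).closure.mul <| ((IsRational.singleton _).union (h _)).mul <|
    ((h _).mul (h _)).closure.mul ((IsRational.singleton _).union (h _))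

theorem monoid_fg_coprodI (hM : ∀ i, Monoid.FG (M i)) : Monoid.FG (CoprodI M) := by
  constructor
  rw [← MonoidHom.mrange_eq_top_of_surjective (MonoidHom.id (CoprodI M)) fun x => ⟨x, rfl⟩,
    ← CoprodI.lift_of', CoprodI.mrange_eq_iSup]
  refine Submonoid.FG.iSup _ fun i => ?_
  rw [MonoidHom.mrange_eq_map]
  exact (hM i).fg_top.map _

theorem exists_cone (h : ∀ i, ∃ P : Set (M i), IsPositiveCone P ∧ HasRegularConeEval P) :
    ∃ P : Set (CoprodI M × Multiplicative ℤ), IsPositiveCone P ∧ HasRegularConeEval P := by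
  choose P hP hR using h
  have := monoid_fg_coprodI fun i => (hR i).monoid_fg
  have : Monoid.FG (Multiplicative ℤ) := Monoid.fg_iff_add_fg.2 (inferInstanceAs (AddMonoid.FG ℤ))
  exact ⟨cone P, isPositiveCone_cone hP, (isRational_cone hP hR).hasRegularConeEval⟩

end FreeProd

/-! ### Transport along isomorphisms -/

theorem exists_cone_of_mulEquiv {G H : Type*} [Group G] [Group H] (e : G ≃* H)
    (h : ∃ P : Set G, IsPositiveCone P ∧ HasRegularConeEval P) :
    ∃ P : Set H, IsPositiveCone P ∧ HasRegularConeEval P := by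
  obtain ⟨P, ⟨h₁, h₂, h₃, h₄⟩, hR⟩ := h
  refine ⟨e '' P, ⟨?_, ?_, ?_, ?_⟩, ?_⟩
  · rintro _ ⟨a, ha, rfl⟩ _ ⟨b, hb, rfl⟩
    exact ⟨a * b, h₁ a ha b hb, map_mul e a b⟩
  · intro g
    obtain ⟨g, rfl⟩ := e.surjective g
    rw [← map_inv, e.injective.mem_set_image, e.injective.mem_set_image,
      EmbeddingLike.map_eq_one_iff]
    exact h₂ g
  · rintro _ ⟨a, ha, rfl⟩
    rw [← map_inv, e.injective.mem_set_image]
    exact h₃ a ha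
  · rw [← map_one e, e.injective.mem_set_image]
    exact h₄
  · have := hR.monoid_fg
    have : Monoid.FG H := Monoid.fg_of_surjective e.toMonoidHom e.surjective
    exact (hR.isRational_image e.toMonoidHom).hasRegularConeEval

universe u v

/-- Two groups as a family indexed by `Bool`, lifted to a common universe. -/
def Fam (A : Type u) (B : Type v) : Bool → Type (max u v)
  | false => ULift.{v} A
  | true => ULift.{u} B

instance (A : Type u) (B : Type v) [Group A] [Group B] : ∀ i, Group (Fam A B i)
  | false => inferInstanceAs (Group (ULift A))
  | true => inferInstanceAs (Group (ULift B))

/-- The binary free product as a free product indexed by `Bool`. -/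
def coprodIEquivCoprod (A : Type u) (B : Type v) [Group A] [Group B] :
    Monoid.CoprodI (Fam A B) ≃* Monoid.Coprod A B :=
  MonoidHom.toMulEquiv
    (Monoid.CoprodI.lift fun
      | false => Monoid.Coprod.inl.comp (MulEquiv.ulift (α := A)).toMonoidHom
      | true => Monoid.Coprod.inr.comp (MulEquiv.ulift (α := B)).toMonoidHom)
    (Monoid.Coprod.lift
      ((Monoid.CoprodI.of (M := Fam A B) (i := false)).comp
        (MulEquiv.ulift (α := A)).symm.toMonoidHom)
      ((Monoid.CoprodI.of (M := Fam A B) (i := true)).comp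
        (MulEquiv.ulift (α := B)).symm.toMonoidHom))
    (Monoid.CoprodI.ext_hom _ _ fun
      | false => rfl
      | true => rfl)
    (Monoid.Coprod.hom_ext rfl rfl)

/-- If `A` and `B` are (finitely generated) groups each admitting a regular positive
cone, then `(A * B) × ℤ` admits a regular positive cone. -/
theorem stmt16 {A B : Type*} [Group A] [Group B]
    (hA : ∃ P : Set A, IsPositiveCone P ∧ HasRegularConeEval P)
    (hB : ∃ P : Set B, IsPositiveCone P ∧ HasRegularConeEval P) :
    ∃ P : Set ((Monoid.Coprod A B) × Multiplicative ℤ),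
      IsPositiveCone P ∧ HasRegularConeEval P := by
  have hM : ∀ i, ∃ P : Set (Fam A B i), IsPositiveCone P ∧ HasRegularConeEval P := fun
    | false => exists_cone_of_mulEquiv MulEquiv.ulift.symm hA
    | true => exists_cone_of_mulEquiv MulEquiv.ulift.symm hB
  exact exists_cone_of_mulEquiv ((coprodIEquivCoprod A B).prodCongr (.refl _))
    (FreeProd.exists_cone hM)
end

section
/- Let G be a (finitely generated non-abelian free)-by-ℤ group, i.e. there is a short exact sequence 1 → F → G → f → ℤ → 1 where F is a finitely generated non-abelian free group. Then: (a) for every positive cone P_F of F, the lexicographic positive cone f⁻¹(ℤ_{>0}) ∪ P_F of G is not regular with respect to any finite generating set of G; (b) the group G × ℤ admits a regular positive cone with respect to some finite generating set. -/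
namespace FreeByZ

/-! ### Geometry of the free group -/

section Core

variable {ι : Type} [DecidableEq ι]

/-- The last letter of the reduced word of `q`. For `q = p⁻¹` it is inverse to the first letter of
`p`, hence records the component of the Cayley tree minus its root in which `p` lies. -/
def lst (q : FreeGroup ι) : Option (ι × Bool) := q.toWord.getLast?

lemma lst_mk_singleton_mul (a : ι × Bool) (q : FreeGroup ι) :
    lst (FreeGroup.mk [a] * q) = lst q ∨ q.norm ≤ 1 := by
  rcases h : q.toWord with _ | ⟨d, _ | ⟨e, tl⟩⟩
  · right; simp [FreeGroup.norm, h]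
  · right; simp [FreeGroup.norm, h]
  · left
    have h1 : (FreeGroup.mk [a] * q).toWord = FreeGroup.reduce (a :: q.toWord) := by
      conv_lhs => rw [← FreeGroup.mk_toWord (x := q)]
      rw [FreeGroup.mul_mk, FreeGroup.toWord_mk]
      rfl
    rw [FreeGroup.reduce.cons, FreeGroup.reduce_toWord, h] at h1
    simp only at h1
    unfold lst
    rw [h1, h]
    split_ifs <;> simp

lemma norm_mk_singleton_mul (a : ι × Bool) (q : FreeGroup ι) :
    q.norm ≤ (FreeGroup.mk [a] * q).norm + 1 := by
  have h : q = (FreeGroup.mk [a])⁻¹ * (FreeGroup.mk [a] * q) := by group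
  calc q.norm = ((FreeGroup.mk [a])⁻¹ * (FreeGroup.mk [a] * q)).norm := by rw [← h]
    _ ≤ (FreeGroup.mk [a])⁻¹.norm + (FreeGroup.mk [a] * q).norm := FreeGroup.norm_mul_le _ _
    _ ≤ _ := by
      rw [FreeGroup.norm_inv_eq]
      have := FreeGroup.norm_mk_le (L₁ := [a])
      simp only [List.length_singleton] at this
      omega

/-- The geodesic spelled by `k` changes component of the Cayley tree only by passing through the
root, so its starting point is then at distance at most `norm k` from the root. -/
lemma norm_le_of_lst_ne (k q : FreeGroup ι) (h : lst (k * q) ≠ lst q) : q.norm ≤ k.norm := by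
  have key : ∀ (L : List (ι × Bool)), lst (FreeGroup.mk L * q) ≠ lst q → q.norm ≤ L.length := by
    intro L
    induction L with
    | nil => intro h; exact absurd (by rw [← FreeGroup.one_eq_mk, one_mul]) h
    | cons a L ih =>
      intro h
      have e : FreeGroup.mk (a :: L) * q = FreeGroup.mk [a] * (FreeGroup.mk L * q) := by
        rw [← mul_assoc, FreeGroup.mul_mk]; rfl
      rw [e] at h
      by_cases h' : lst (FreeGroup.mk L * q) = lst q
      · rw [← h'] at h
        have h1 := (lst_mk_singleton_mul a (FreeGroup.mk L * q)).resolve_left h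
        have h2 : q.norm ≤ (FreeGroup.mk L)⁻¹.norm + (FreeGroup.mk L * q).norm := by
          simpa only [inv_mul_cancel_left] using
            FreeGroup.norm_mul_le (FreeGroup.mk L)⁻¹ (FreeGroup.mk L * q)
        rw [FreeGroup.norm_inv_eq] at h2
        have h3 := FreeGroup.norm_mk_le (L₁ := L)
        simp only [List.length_cons]
        omega
      · have := ih h'
        simp only [List.length_cons]
        omega
  have := key k.toWord
  rw [FreeGroup.mk_toWord] at this
  exact this h

lemma lst_inv (p : FreeGroup ι) :
    lst p⁻¹ = p.toWord.head?.map (fun a => (a.1, !a.2)) := by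
  unfold lst
  rw [FreeGroup.toWord_inv, FreeGroup.invRev, List.getLast?_reverse, List.head?_map]

lemma head_mk_singleton_mul (a c : ι × Bool) (y : FreeGroup ι)
    (hy : y.toWord.head? = some c) (hac : c.1 ≠ a.1) :
    (FreeGroup.mk [a] * y).toWord.head? = some a := by
  have h1 : (FreeGroup.mk [a] * y).toWord = FreeGroup.reduce (a :: y.toWord) := by
    conv_lhs => rw [← FreeGroup.mk_toWord (x := y)]
    rw [FreeGroup.mul_mk, FreeGroup.toWord_mk]
    rfl
  rw [FreeGroup.reduce.cons, FreeGroup.reduce_toWord] at h1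
  rw [h1]
  rcases h : y.toWord with _ | ⟨d, tl⟩
  · rfl
  · rw [h] at hy
    simp only [List.head?_cons, Option.some.injEq] at hy
    subst hy
    simp [Ne.symm hac]

lemma finite_ball [Finite ι] (r : ℕ) : {k : FreeGroup ι | k.norm ≤ r}.Finite := by
  have h : {L : List (ι × Bool) | L.length ≤ r}.Finite := List.finite_length_le _ _
  refine (h.image FreeGroup.mk).subset ?_
  intro k hk
  exact ⟨k.toWord, hk, FreeGroup.mk_toWord⟩

/-- Finite subsets of a nontrivial left-ordered group have strict upper bounds. -/
lemma exists_bound {H : Type*} [Group H] {P : Set H} (hP : IsPositiveCone P) {p : H} (hp : p ∈ P)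
    {S : Set H} (hS : S.Finite) : ∃ y, ∀ b ∈ S, b⁻¹ * y ∈ P := by
  induction S, hS using Set.Finite.induction_on with
  | empty => exact ⟨1, by simp⟩
  | @insert b S _ _ ih =>
    obtain ⟨y, hy⟩ := ih
    obtain ⟨hmul, htri, _, _⟩ := hP
    by_cases h : b⁻¹ * y ∈ P
    · exact ⟨y, by rintro c (rfl | hc); exacts [h, hy c hc]⟩
    · refine ⟨b * p, ?_⟩
      rintro c (rfl | hc)
      · simpa using hp
      · rcases htri (b⁻¹ * y) with h1 | h1 | h1
        · exact absurd h1 h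
        · have := hmul _ (hmul _ (hy c hc) _ h1) _ hp
          simpa [mul_assoc] using this
        · have hb : b = y := by rwa [inv_mul_eq_one] at h1
          subst hb
          rw [← mul_assoc]
          exact hmul _ (hy c hc) _ hp

/-- Positive cones of a free group of rank at least two are not coarsely connected: some positive
`g` has the property that every path from `1` to `g` with steps of length at most `K` visits the
centre of a ball of radius `K` disjoint from the cone. -/
lemma exists_separated [Fintype ι] (hι : 2 ≤ Fintype.card ι) {P : Set (FreeGroup ι)}
    (hP : IsPositiveCone P) (K : ℕ) :
    ∃ g ∈ P, ∀ (path : ℕ → FreeGroup ι) (n : ℕ), path 0 = 1 → path n = g →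
      (∀ i < n, ((path i)⁻¹ * path (i + 1)).norm ≤ K) →
      ∃ i ≤ n, ∀ b : FreeGroup ι, b.norm ≤ K → path i * b ∉ P := by
  have : Nontrivial ι := Fintype.one_lt_card_iff_nontrivial.mp hι
  obtain ⟨j, -⟩ := exists_pair_ne ι
  obtain ⟨p, hp⟩ : ∃ p, p ∈ P := by
    rcases hP.2.1 (FreeGroup.of j) with h | h | h
    exacts [⟨_, h⟩, ⟨_, h⟩, absurd h (FreeGroup.of_ne_one j)]
  -- `y` exceeds the ball of radius `2 * K`, so the translate of this ball by `y⁻¹` is negative.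
  obtain ⟨y, hy⟩ := exists_bound hP hp (finite_ball (ι := ι) (2 * K))
  have hyP : y ∈ P := by simpa using hy 1 (by simp)
  have hy1 : y ≠ 1 := fun h => hP.2.2.2 (h ▸ hyP)
  obtain ⟨c, hc⟩ : ∃ c, y.toWord.head? = some c := by
    rcases h : y.toWord with _ | ⟨d, tl⟩
    · exact absurd (FreeGroup.toWord_eq_nil_iff.mp h) hy1
    · exact ⟨d, rfl⟩
  obtain ⟨i, hi⟩ := exists_ne c.1
  -- A conjugate by `y` of a letter or of its inverse is positive.
  obtain ⟨b, hb⟩ : ∃ b : Bool, y⁻¹ * (FreeGroup.mk [(i, b)] * y) ∈ P := by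
    have hinv : FreeGroup.mk [(i, false)] = (FreeGroup.mk [(i, true)])⁻¹ := rfl
    rcases hP.2.1 (y⁻¹ * (FreeGroup.mk [(i, true)] * y)) with h | h | h
    · exact ⟨true, h⟩
    · refine ⟨false, ?_⟩
      rw [hinv]
      simpa [mul_assoc] using h
    · exfalso
      have : FreeGroup.of i = 1 := by
        have h2 : FreeGroup.mk [(i, true)] * y = y := by
          rwa [inv_mul_eq_one, eq_comm] at h
        exact mul_eq_right.mp h2
      exact FreeGroup.of_ne_one i this
  refine ⟨_, hb, ?_⟩
  intro path n h0 hn hstep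
  by_contra! hcon
  have hfar : ∀ i ≤ n, K < (y * path i)⁻¹.norm := by
    intro i hi
    by_contra! h
    obtain ⟨b, hbK, hbP⟩ := hcon i hi
    have h1 : (y * path i * b).norm ≤ 2 * K := by
      have := FreeGroup.norm_mul_le (y * path i) b
      rw [FreeGroup.norm_inv_eq] at h
      omega
    have h2 := hy _ h1
    have h3 : (y * path i * b)⁻¹ * y = (path i * b)⁻¹ := by group
    rw [h3] at h2
    exact hP.2.2.1 _ hbP h2
  have hconst : ∀ i ≤ n, lst (y * path i)⁻¹ = lst (y * path 0)⁻¹ := by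
    intro i
    induction i with
    | zero => intro _; rfl
    | succ i ih =>
      intro hi
      rw [← ih (by omega)]
      by_contra h
      have e : (y * path (i + 1))⁻¹ = ((path i)⁻¹ * path (i + 1))⁻¹ * (y * path i)⁻¹ := by group
      rw [e] at h
      have h1 := norm_le_of_lst_ne _ _ h
      have h2 := hstep i (by omega)
      have h3 := hfar i (by omega)
      rw [FreeGroup.norm_inv_eq (x := (path i)⁻¹ * path (i + 1))] at h1
      omega
  have := hconst n le_rfl
  rw [hn, h0, mul_one, mul_inv_cancel_left, lst_inv, lst_inv, hc,
    head_mk_singleton_mul (i, b) c y hc hi.symm] at this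
  simp only [Option.map_some, Option.some.injEq, Prod.mk.injEq] at this
  exact hi this.1

end Core

/-! ### Lexicographic cones are not regular -/

section NotRegular

lemma exists_nat_bound {α : Type*} [Finite α] (F : α → ℕ) : ∃ C, ∀ x, F x ≤ C := by
  obtain ⟨C, hC⟩ := (Set.finite_range F).bddAbove
  exact ⟨C, fun x => hC ⟨x, rfl⟩⟩

/-- The height of a word: the image under `f` of the element it represents, as an integer. -/
def ht {X : Type*} {G : Type*} [Group G] (f : G →* Multiplicative ℤ) (π : FreeMonoid X →* G)
    (w : List X) : ℤ := Multiplicative.toAdd (f (π (FreeMonoid.ofList w)))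

lemma ht_append {X : Type*} {G : Type*} [Group G] (f : G →* Multiplicative ℤ)
    (π : FreeMonoid X →* G) (u v : List X) : ht f π (u ++ v) = ht f π u + ht f π v := by
  simp [ht, FreeMonoid.ofList_append]

lemma append_mem_accepts {X σ : Type*} (M : DFA X σ) (u v : List X) :
    u ++ v ∈ M.accepts ↔ M.evalFrom (M.eval u) v ∈ M.accept := by
  rw [DFA.mem_accepts, DFA.eval, DFA.evalFrom_of_append]

/-- If a word of height `0` lies in a regular language all of whose words have nonnegative height,
then the heights of its prefixes are bounded by a constant of the language: a prefix completes to
a word of the language by one of finitely many suffixes, and dually for a suffix. -/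
lemma exists_height_bound {X : Type*} {G : Type*} [Group G] (f : G →* Multiplicative ℤ)
    (π : FreeMonoid X →* G) {σ : Type} [Fintype σ] (M : DFA X σ)
    (hM : ∀ w ∈ M.accepts, 0 ≤ ht f π w) :
    ∃ C : ℕ, ∀ u v, u ++ v ∈ M.accepts → ht f π (u ++ v) = 0 → (ht f π u).natAbs ≤ C := by
  classical
  let c : σ → List X := fun q => if h : ∃ v, M.evalFrom q v ∈ M.accept then h.choose else []
  let r : σ → List X := fun q => if h : ∃ u, M.eval u = q then h.choose else []
  obtain ⟨C, hC⟩ := exists_nat_bound fun q => (ht f π (c q)).natAbs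
  obtain ⟨D, hD⟩ := exists_nat_bound fun q => (ht f π (r q)).natAbs
  refine ⟨C + D, fun u v huv h0 => ?_⟩
  have hacc := (append_mem_accepts M u v).mp huv
  have h1 : 0 ≤ ht f π (u ++ c (M.eval u)) := by
    have h : ∃ v, M.evalFrom (M.eval u) v ∈ M.accept := ⟨v, hacc⟩
    apply hM
    rw [append_mem_accepts]
    simp only [c, dif_pos h]
    exact h.choose_spec
  have h2 : 0 ≤ ht f π (r (M.eval u) ++ v) := by
    have h : ∃ u', M.eval u' = M.eval u := ⟨u, rfl⟩
    have h' : M.eval (r (M.eval u)) = M.eval u := by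
      simp only [r, dif_pos h]
      exact h.choose_spec
    apply hM
    rw [append_mem_accepts, h']
    exact hacc
  have h3 := hC (M.eval u)
  have h4 := hD (M.eval u)
  rw [ht_append] at h0 h1 h2
  omega

/-- In a free-by-`ℤ` group, words representing the cone of the kernel trace paths in the kernel
(after shifting each prefix back to height `0`) whose steps are bounded and which stay close to the
cone. This contradicts `exists_separated`. -/
theorem not_regular {G : Type*} [Group G] (f : G →* Multiplicative ℤ)
    (hf : Function.Surjective f)
    (ι : Type) [Fintype ι] (hι : 2 ≤ Fintype.card ι)
    (φ : ↥(MonoidHom.ker f) ≃* FreeGroup ι) (PF : Set G) (hPF : IsPositiveConeIn f.ker PF) :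
    ¬ HasRegularConeEval ({g : G | 0 < Multiplicative.toAdd (f g)} ∪ PF) := by
  classical
  rintro ⟨X, _, π, -, L, ⟨σ, _, M, rfl⟩, hL⟩
  obtain ⟨t, ht1⟩ := hf (Multiplicative.ofAdd 1)
  have htz : ∀ k : ℤ, f (t ^ k) = Multiplicative.ofAdd k := by
    intro k
    rw [map_zpow, ht1, ← ofAdd_zsmul, smul_eq_mul, mul_one]
  let j : FreeGroup ι →* G := f.ker.subtype.comp φ.symm.toMonoidHom
  have hjinj : Function.Injective j := f.ker.subtype_injective.comp φ.symm.injective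
  have hjker : ∀ x, j x ∈ f.ker := fun x => (φ.symm x).2
  let ji : G → FreeGroup ι := fun g => if h : g ∈ f.ker then φ ⟨g, h⟩ else 1
  have hji : ∀ g, f g = 1 → j (ji g) = g := by
    intro g hg
    have hg' : g ∈ f.ker := hg
    simp only [ji, dif_pos hg']
    simp [j]
  obtain ⟨hPk, hPmul, hPtri, hPinv, hP1⟩ := hPF
  have hP : IsPositiveCone (j ⁻¹' PF) := by
    refine ⟨fun a ha b hb => ?_, fun g => ?_, fun g hg => ?_, ?_⟩
    · simpa using hPmul _ ha _ hb
    · rcases hPtri (j g) (hjker g) with h | h | h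
      · exact Or.inl h
      · exact Or.inr (Or.inl (by simpa using h))
      · exact Or.inr (Or.inr (hjinj (by simpa using h)))
    · simpa using hPinv _ hg
    · simpa using hP1
  have hacc : ∀ w ∈ M.accepts, π (FreeMonoid.ofList w) ∈
      ({g : G | 0 < Multiplicative.toAdd (f g)} ∪ PF) := fun w hw => hL ▸ ⟨w, hw, rfl⟩
  have hnonneg : ∀ w ∈ M.accepts, 0 ≤ ht f π w := by
    intro w hw
    rcases hacc w hw with h | h
    · exact le_of_lt h
    · have : f (π (FreeMonoid.ofList w)) = 1 := hPk h
      simp [ht, this]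
  have hzero : ∀ w ∈ M.accepts, ht f π w = 0 → π (FreeMonoid.ofList w) ∈ PF := by
    intro w hw h0
    rcases hacc w hw with h | h
    · exact absurd h0 (ne_of_gt h)
    · exact h
  obtain ⟨C, hC⟩ := exists_height_bound f π M hnonneg
  -- The position in the free group of a prefix, shifted back to height `0`.
  let ψ : List X → FreeGroup ι := fun u => ji (π (FreeMonoid.ofList u) * t ^ (-ht f π u))
  have hψ : ∀ u, j (ψ u) = π (FreeMonoid.ofList u) * t ^ (-ht f π u) := by
    intro u
    apply hji
    rw [map_mul, htz]
    apply Multiplicative.toAdd.injective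
    simp [ht]
  let I := ↥(Finset.Icc (-(C : ℤ)) C)
  -- Steps of the path depend only on the height and the letter read.
  let step : I × X → FreeGroup ι := fun p =>
    ji (t ^ (p.1 : ℤ) * π (FreeMonoid.of p.2) * t ^ (-((p.1 : ℤ) + ht f π [p.2])))
  -- A completion of height `-k` from the state `q`, where one exists.
  let c : σ × I → List X := fun p =>
    if h : ∃ v, M.evalFrom p.1 v ∈ M.accept ∧ ht f π v = -(p.2 : ℤ) then h.choose else []
  let comp : σ × I → FreeGroup ι := fun p => ji (t ^ (p.2 : ℤ) * π (FreeMonoid.ofList (c p)))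
  obtain ⟨K₁, hK₁⟩ := exists_nat_bound fun p => (step p).norm
  obtain ⟨K₂, hK₂⟩ := exists_nat_bound fun p => (comp p).norm
  obtain ⟨g, hg, hsep⟩ := exists_separated hι hP (max K₁ K₂)
  obtain ⟨w, hw, hwg⟩ : ∃ w ∈ M.accepts, π (FreeMonoid.ofList w) = j g := by
    have : j g ∈ evalLang π M.accepts := hL ▸ Or.inr hg
    exact this
  have hw0 : ht f π w = 0 := by
    have : f (j g) = 1 := hjker g
    simp [ht, hwg, this]
  have hbd : ∀ i, ht f π (w.take i) ∈ Finset.Icc (-(C : ℤ)) C := by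
    intro i
    have := hC (w.take i) (w.drop i) (by rwa [List.take_append_drop])
      (by rwa [List.take_append_drop])
    rw [Finset.mem_Icc]
    omega
  have hstart : ψ (w.take 0) = 1 := by
    apply hjinj
    simp [hψ, ht]
  have hend : ψ (w.take w.length) = g := by
    apply hjinj
    rw [List.take_length, hψ, hw0, hwg]
    simp
  have hsteps : ∀ i < w.length, ((ψ (w.take i))⁻¹ * ψ (w.take (i + 1))).norm ≤ max K₁ K₂ := by
    intro i hi
    let p : I × X := (⟨_, hbd i⟩, w[i])
    have htake : w.take (i + 1) = w.take i ++ [w[i]] := by simp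
    have : (ψ (w.take i))⁻¹ * ψ (w.take (i + 1)) = step p := by
      apply hjinj
      have hstep : j (step p) =
          t ^ (p.1 : ℤ) * π (FreeMonoid.of p.2) * t ^ (-((p.1 : ℤ) + ht f π [p.2])) := by
        apply hji
        rw [map_mul, map_mul, htz, htz]
        apply Multiplicative.toAdd.injective
        simp [ht]
      rw [hstep, map_mul, map_inv, hψ, hψ, htake, ht_append, FreeMonoid.ofList_append, map_mul,
        FreeMonoid.ofList_singleton]
      simp only [p]
      group
    rw [this]
    exact (hK₁ p).trans (le_max_left _ _)
  obtain ⟨i, -, hi⟩ := hsep (fun i => ψ (w.take i)) w.length hstart hend hsteps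
  let p : σ × I := (M.eval (w.take i), ⟨_, hbd i⟩)
  have hex : ∃ v, M.evalFrom p.1 v ∈ M.accept ∧ ht f π v = -(p.2 : ℤ) := by
    refine ⟨w.drop i, ?_, ?_⟩
    · have := hw
      rwa [← List.take_append_drop i w, append_mem_accepts] at this
    · have := hw0
      rw [← List.take_append_drop i w, ht_append] at this
      simp only [p]
      omega
  have hcp : M.evalFrom p.1 (c p) ∈ M.accept ∧ ht f π (c p) = -(p.2 : ℤ) := by
    simp only [c, dif_pos hex]
    exact hex.choose_spec
  refine hi (comp p) ((hK₂ p).trans (le_max_right _ _)) ?_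
  have hcomp : j (comp p) = t ^ (p.2 : ℤ) * π (FreeMonoid.ofList (c p)) := by
    apply hji
    rw [map_mul, htz]
    apply Multiplicative.toAdd.injective
    have := hcp.2
    rw [ht] at this
    rw [toAdd_mul, this]
    simp
  have hmem : w.take i ++ c p ∈ M.accepts := by
    rw [append_mem_accepts]
    exact hcp.1
  have h0 : ht f π (w.take i ++ c p) = 0 := by
    rw [ht_append, hcp.2]
    simp [p]
  have := hzero _ hmem h0
  rw [Set.mem_preimage, map_mul, hψ, hcomp]
  simpa [FreeMonoid.ofList_append, p, mul_assoc] using this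

end NotRegular

/-! ### A superadditive function on words -/

section Weight

variable {ι : Type}

/-- The weight of a single letter: `0` for a generator and `-1` for the inverse of a generator. -/
def lw (a : ι × Bool) : ℤ := if a.2 then 0 else -1

/-- The weight of the turn from a letter `a` to a letter `b`: it is `1` when `a⁻¹ < b` in the order
of the letters given by `ord`, and `0` otherwise. The value `none` stands for the start of a word,
where there is no turn. -/
def turn (ord : ι × Bool → ℕ) : Option (ι × Bool) → ι × Bool → ℤ
  | none, _ => 0
  | some a, b => if ord (a.1, !a.2) < ord b then 1 else 0

/-- The weight of a word read after the letter `p`: the sum of the weights of its letters and of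
its turns. -/
def ew (ord : ι × Bool → ℕ) : Option (ι × Bool) → List (ι × Bool) → ℤ
  | _, [] => 0
  | p, a :: l => lw a + turn ord p a + ew ord (some a) l

variable (ord : ι × Bool → ℕ)

lemma turn_nonneg (p : Option (ι × Bool)) (a : ι × Bool) : 0 ≤ turn ord p a := by
  cases p <;> simp only [turn] <;> try split_ifs
  all_goals simp

lemma turn_le_one (p : Option (ι × Bool)) (a : ι × Bool) : turn ord p a ≤ 1 := by
  cases p <;> simp only [turn] <;> try split_ifs
  all_goals simp

lemma lw_add (i : ι) (b : Bool) : lw (i, b) + lw (i, !b) = -1 := by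
  cases b <;> simp [lw]

lemma ew_none_le (p : Option (ι × Bool)) (v : List (ι × Bool)) : ew ord none v ≤ ew ord p v := by
  cases v with
  | nil => simp [ew]
  | cons a v =>
    have h1 := turn_nonneg ord p a
    have h2 : turn ord none a = 0 := rfl
    simp only [ew]
    omega

lemma ew_append (p : Option (ι × Bool)) (u v : List (ι × Bool)) :
    ew ord p u + ew ord none v ≤ ew ord p (u ++ v) := by
  induction u generalizing p with
  | nil => simpa [ew] using ew_none_le ord p v
  | cons a u ih =>
    have := ih (some a)
    simp only [ew, List.cons_append]
    omega

lemma ew_snoc (p : Option (ι × Bool)) (v : List (ι × Bool)) (c d : ι × Bool) :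
    ew ord p (v ++ [c] ++ [d]) = ew ord p (v ++ [c]) + turn ord (some c) d + lw d := by
  induction v generalizing p with
  | nil => simp only [ew, List.nil_append, List.cons_append]; ring
  | cons a v ih =>
    have := ih (some a)
    simp only [ew, List.cons_append] at this ⊢
    rw [this]
    ring

/-- Cancelling a pair `s s⁻¹` loses the letter weight `-1` and at most one of the two turns into
`s` and out of `s⁻¹` beyond the new turn, so the weight does not decrease. -/
lemma ew_cancel (p : Option (ι × Bool)) (u v : List (ι × Bool)) (i : ι) (b : Bool) :
    ew ord p (u ++ (i, b) :: (i, !b) :: v) ≤ ew ord p (u ++ v) := by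
  induction u generalizing p with
  | nil =>
    have h1 := lw_add i b
    have h2 : turn ord (some (i, b)) (i, !b) = 0 := by simp [turn]
    cases v with
    | nil =>
      have h3 := turn_le_one ord p (i, b)
      simp only [ew, List.nil_append]
      omega
    | cons c v =>
      have h3 : turn ord p (i, b) + turn ord (some (i, !b)) c ≤ 1 + turn ord p c := by
        cases p with
        | none =>
          have := turn_le_one ord (some (i, !b)) c
          simp only [turn] at this ⊢
          omega
        | some a =>
          simp only [turn, Bool.not_not]
          split_ifs <;> omega
      simp only [ew, List.nil_append]
      omega
  | cons a u ih =>
    have := ih (some a)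
    simp only [ew, List.cons_append]
    omega

lemma ew_red {u v : List (ι × Bool)} (h : FreeGroup.Red u v) : ew ord none u ≤ ew ord none v := by
  induction h with
  | refl => rfl
  | tail _ h ih =>
    cases h
    exact ih.trans (ew_cancel ord _ _ _ _ _)

/-- A nonempty word representing `1` reduces to some `s s⁻¹`, whose weight is `-1`. -/
lemma ew_neg_of_mk_eq_one {u : List (ι × Bool)} (h : FreeGroup.mk u = 1) (hu : u ≠ []) :
    ew ord none u < 0 := by
  classical
  have hred : FreeGroup.Red u [] := by
    have := FreeGroup.reduce.red (L := u)
    rwa [← FreeGroup.toWord_mk, h, FreeGroup.toWord_one] at this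
  rcases hred.cases_tail with h | ⟨c, hc, hs⟩
  · exact absurd h.symm hu
  · have h1 := ew_red ord hc
    generalize he : ([] : List (ι × Bool)) = e at hs
    cases hs with
    | @not L₁ L₂ i b =>
      obtain ⟨rfl, rfl⟩ := List.append_eq_nil_iff.mp he.symm
      have h2 : ew ord none [(i, b), (i, !b)] = -1 := by
        have := lw_add i b
        simp only [ew, turn, lt_irrefl, if_false]
        omega
      simp only [List.nil_append] at h1
      omega

/-- In a reduced word exactly one of a turn and its reverse has weight `1`. -/
lemma ew_invRev (hord : Function.Injective ord) (a : ι × Bool) (l : List (ι × Bool))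
    (h : FreeGroup.IsReduced (a :: l)) :
    -1 ≤ ew ord none (a :: l) + ew ord none (FreeGroup.invRev (a :: l)) := by
  induction l generalizing a with
  | nil =>
    have : lw a + lw (a.1, !a.2) = -1 := lw_add a.1 a.2
    simp only [FreeGroup.invRev, ew, turn, List.map_cons, List.map_nil, List.reverse_singleton]
    omega
  | cons b l ih =>
    rw [FreeGroup.isReduced_cons_cons] at h
    have h1 := ih b h.2
    have h2 : lw a + lw (a.1, !a.2) = -1 := lw_add a.1 a.2
    have h3 : turn ord (some a) b + turn ord (some (b.1, !b.2)) (a.1, !a.2) = 1 := by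
      have hne : ord (a.1, !a.2) ≠ ord b := by
        intro he
        have := hord he
        have h4 := h.1 (by rw [← this])
        rw [← this] at h4
        simp at h4
      simp only [turn, Bool.not_not, Prod.mk.eta]
      split_ifs <;> omega
    have h4 : ∀ c, turn ord none c = 0 := fun _ => rfl
    have e : FreeGroup.invRev (a :: b :: l)
        = FreeGroup.invRev l ++ [(b.1, !b.2)] ++ [(a.1, !a.2)] := by
      simp [FreeGroup.invRev]
    have e' : FreeGroup.invRev (b :: l) = FreeGroup.invRev l ++ [(b.1, !b.2)] := by
      simp [FreeGroup.invRev]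
    rw [e, ew_snoc]
    rw [e'] at h1
    simp only [ew, h4] at h1 ⊢
    omega

end Weight

/-! ### The regular cone -/

section Regular

variable {ι : Type} {G : Type*} [Group G]

/-- The lexicographic cone on `G × ℤ` led by `f`. On the kernel `F × ℤ`, with `F` embedded in `G`
by `j`, an element `(g, n)` is positive when `0 ≤ n + ew u` for some word `u` representing `g`,
where `u` is nonempty or `0 < n`. -/
def cone (ord : ι × Bool → ℕ) (f : G →* Multiplicative ℤ) (j : FreeGroup ι →* G) :
    Set (G × Multiplicative ℤ) :=
  {x | 0 < Multiplicative.toAdd (f x.1)} ∪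
  {x | ∃ u, x.1 = j (FreeGroup.mk u) ∧ 0 ≤ Multiplicative.toAdd x.2 + ew ord none u ∧
    (u = [] → 0 < Multiplicative.toAdd x.2)}

lemma isPositiveCone_cone (ord : ι × Bool → ℕ) (hord : Function.Injective ord)
    (f : G →* Multiplicative ℤ) (j : FreeGroup ι →* G) (hj : Function.Injective j)
    (hker : ∀ x, f (j x) = 1) (hrange : ∀ g, f g = 1 → ∃ x, j x = g) :
    IsPositiveCone (cone ord f j) := by
  classical
  have hmul : ∀ a ∈ cone ord f j, ∀ b ∈ cone ord f j, a * b ∈ cone ord f j := by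
    rintro ⟨g, n⟩ (ha | ⟨u, hu, ha1, ha2⟩) ⟨h, m⟩ (hb | ⟨v, hv, hb1, hb2⟩)
    · left
      simp only [Set.mem_ofPred_eq, Prod.mk_mul_mk, map_mul, toAdd_mul] at *
      omega
    · left
      simp only [Set.mem_ofPred_eq, Prod.mk_mul_mk, map_mul, toAdd_mul] at *
      simpa [hv, hker] using ha
    · left
      simp only [Set.mem_ofPred_eq, Prod.mk_mul_mk, map_mul, toAdd_mul] at *
      simpa [hu, hker] using hb
    · right
      refine ⟨u ++ v, ?_, ?_, ?_⟩
      · simp only at hu hv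
        simp [hu, hv, ← FreeGroup.mul_mk]
      · have := ew_append ord none u v
        simp only [Prod.mk_mul_mk, toAdd_mul] at *
        omega
      · intro h
        obtain ⟨rfl, rfl⟩ := List.append_eq_nil_iff.mp h
        have h1 := ha2 rfl
        have h2 := hb2 rfl
        simp only [Prod.mk_mul_mk, toAdd_mul] at *
        omega
  have hone : (1 : G × Multiplicative ℤ) ∉ cone ord f j := by
    rintro (h | ⟨u, hu, h1, h2⟩)
    · simp at h
    · have hu1 : FreeGroup.mk u = 1 := hj (by rw [← hu, map_one]; rfl)
      simp only [Prod.snd_one, toAdd_one, zero_add, lt_irrefl, imp_false] at h1 h2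
      exact absurd (ew_neg_of_mk_eq_one ord hu1 h2) (not_lt.mpr h1)
  refine ⟨hmul, ?_, fun g hg hg' => hone ?_, hone⟩
  · rintro ⟨g, n⟩
    rcases lt_trichotomy 0 (Multiplicative.toAdd (f g)) with h | h | h
    · exact Or.inl (Or.inl h)
    · obtain ⟨x, rfl⟩ := hrange g (Multiplicative.toAdd.injective h.symm)
      rcases hx : x.toWord with _ | ⟨a, l⟩
      · have hx1 : x = 1 := FreeGroup.toWord_eq_nil_iff.mp hx
        subst hx1
        rcases lt_trichotomy 0 (Multiplicative.toAdd n) with h | h | h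
        · exact Or.inl (Or.inr ⟨[], rfl, by simpa [ew] using h.le, fun _ => h⟩)
        · right; right
          have : n = 1 := Multiplicative.toAdd.injective h.symm
          simp [this]
        · right; left; right
          refine ⟨[], ?_, ?_, ?_⟩
          · simp [← FreeGroup.one_eq_mk]
          · simpa [ew] using h.le
          · simpa using h
      · have hxm : x = FreeGroup.mk (a :: l) := by rw [← hx, FreeGroup.mk_toWord]
        have hred : FreeGroup.IsReduced (a :: l) := hx ▸ FreeGroup.isReduced_toWord
        have h1 := ew_invRev ord hord a l hred
        by_cases h2 : 0 ≤ Multiplicative.toAdd n + ew ord none (a :: l)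
        · exact Or.inl (Or.inr ⟨a :: l, by rw [hxm], h2, by simp⟩)
        · right; left; right
          refine ⟨FreeGroup.invRev (a :: l), ?_, ?_, ?_⟩
          · rw [← FreeGroup.inv_mk, ← hxm]; simp
          · simp only [Prod.inv_mk, toAdd_inv]
            omega
          · intro h
            have := congrArg List.length h
            simp at this
    · right; left; left
      simpa using h
  · have := hmul _ hg _ hg'
    rwa [mul_inv_cancel] at this

/-- The alphabet for `G × ℤ`: letters `t` and `z` with a sign for the two infinite cyclic
directions, and letters `s a δ` for each letter `a` of the free group and each choice of a bit
`δ`. -/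
inductive Letter (ι : Type)
  | t (b : Bool)
  | z (b : Bool)
  | s (a : ι × Bool) (δ : Bool)

instance [Finite ι] : Finite (Letter ι) := by
  refine Finite.of_surjective
    (fun x : (Bool ⊕ Bool) ⊕ ((ι × Bool) × Bool) => match x with
      | .inl (.inl b) => Letter.t b
      | .inl (.inr b) => Letter.z b
      | .inr (a, δ) => Letter.s a δ) ?_
  rintro (b | b | ⟨a, δ⟩)
  exacts [⟨.inl (.inl b), rfl⟩, ⟨.inl (.inr b), rfl⟩, ⟨.inr (a, δ), rfl⟩]

/-- A bit as an integer. -/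
def bit (δ : Bool) : ℤ := if δ then 1 else 0

/-- The value of a letter. The letter `s a δ` compensates the weight of `a` in the second
coordinate, as well as the weight `δ` of the turn into `a`. -/
def ev (j : FreeGroup ι →* G) (t : G) : Letter ι → G × Multiplicative ℤ
  | .t true => (t, 1)
  | .t false => (t⁻¹, 1)
  | .z true => (1, Multiplicative.ofAdd 1)
  | .z false => (1, Multiplicative.ofAdd (-1))
  | .s a δ => (j (FreeGroup.mk [a]), Multiplicative.ofAdd (-lw a - bit δ))

/-- States of the automaton: the state `lex p` is reached inside the kernel after the last letter
`p` of the free group, the state `pos` after an initial letter `t`. -/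
inductive State (ι : Type)
  | start
  | pos
  | dead
  | lex (p : Option (ι × Bool))

instance [Finite ι] : Finite (State ι) := by
  refine Finite.of_surjective
    (fun x : Fin 3 ⊕ Option (ι × Bool) => match x with
      | .inl 0 => State.start
      | .inl 1 => State.pos
      | .inl 2 => State.dead
      | .inr p => State.lex p) ?_
  rintro (_ | _ | _ | p)
  exacts [⟨.inl 0, rfl⟩, ⟨.inl 1, rfl⟩, ⟨.inl 2, rfl⟩, ⟨.inr p, rfl⟩]

/-- The automaton accepts the words that start with `t` and do not contain `t⁻¹`, and the nonempty
words in the letters `z` and `s a δ` in which `δ` is at most the weight of the turn into `a`. -/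
def aut (ord : ι × Bool → ℕ) : DFA (Letter ι) (State ι) where
  step
    | .start, .t true => .pos
    | .start, .z true => .lex none
    | .start, .s a δ => if bit δ ≤ turn ord none a then .lex (some a) else .dead
    | .lex p, .z true => .lex p
    | .lex p, .s a δ => if bit δ ≤ turn ord p a then .lex (some a) else .dead
    | .pos, .t false => .dead
    | .pos, _ => .pos
    | _, _ => .dead
  start := .start
  accept := {x | x = .pos ∨ ∃ p, x = .lex p}

section Automaton

variable (ord : ι × Bool → ℕ) (f : G →* Multiplicative ℤ) (j : FreeGroup ι →* G) (t : G)

/-- The value of a word. -/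
def val (w : List (Letter ι)) : G × Multiplicative ℤ := (w.map (ev j t)).prod

@[simp] lemma val_nil : val j t [] = 1 := rfl

@[simp] lemma val_cons (x : Letter ι) (w : List (Letter ι)) :
    val j t (x :: w) = ev j t x * val j t w := by simp [val]

@[simp] lemma val_append (u w : List (Letter ι)) :
    val j t (u ++ w) = val j t u * val j t w := by simp [val]

lemma not_accept_dead (w : List (Letter ι)) :
    (aut ord).evalFrom .dead w ∉ (aut ord).accept := by
  induction w with
  | nil => simp [aut]
  | cons x w ih => exact ih

lemma accept_pos_iff (w : List (Letter ι)) :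
    (aut ord).evalFrom .pos w ∈ (aut ord).accept ↔ ∀ x ∈ w, x ≠ .t false := by
  induction w with
  | nil => simp [aut]
  | cons x w ih =>
    rw [List.forall_mem_cons, ← ih]
    rcases x with (_ | _) | b | ⟨a, δ⟩
    · exact iff_of_false (not_accept_dead ord w) fun h => h.1 rfl
    all_goals exact (and_iff_right (by simp)).symm

lemma height_nonneg (ht : f t = Multiplicative.ofAdd 1) (hker : ∀ x, f (j x) = 1)
    (w : List (Letter ι)) (hw : ∀ x ∈ w, x ≠ .t false) :
    0 ≤ Multiplicative.toAdd (f (val j t w).1) := by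
  induction w with
  | nil => simp
  | cons x w ih =>
    have h := ih fun y hy => hw y (List.mem_cons_of_mem _ hy)
    have hx := hw x List.mem_cons_self
    rcases x with (_ | _) | (_ | _) | ⟨a, δ⟩
    · exact absurd rfl hx
    · simp only [val_cons, ev, Prod.fst_mul, map_mul, ht, toAdd_mul, toAdd_ofAdd]
      omega
    all_goals simpa [ev, hker] using h

lemma lex_sound (p : Option (ι × Bool)) (w : List (Letter ι))
    (hw : (aut ord).evalFrom (.lex p) w ∈ (aut ord).accept) :
    ∃ u, (val j t w).1 = j (FreeGroup.mk u) ∧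
      0 ≤ Multiplicative.toAdd (val j t w).2 + ew ord p u ∧
      (u = [] → w ≠ [] → 0 < Multiplicative.toAdd (val j t w).2) := by
  induction w generalizing p with
  | nil => exact ⟨[], by simp [← FreeGroup.one_eq_mk], by simp [ew], by simp⟩
  | cons x w ih =>
    rw [DFA.evalFrom_cons] at hw
    rcases x with b | (_ | _) | ⟨a, δ⟩
    · exact absurd hw (not_accept_dead ord w)
    · exact absurd hw (not_accept_dead ord w)
    · obtain ⟨u, h1, h2, -⟩ := ih p hw
      refine ⟨u, ?_, ?_, ?_⟩
      · simpa [ev] using h1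
      · simp only [val_cons, ev, Prod.snd_mul, toAdd_mul, toAdd_ofAdd]
        omega
      · rintro rfl -
        simp only [val_cons, ev, Prod.snd_mul, toAdd_mul, toAdd_ofAdd, ew] at h2 ⊢
        omega
    · by_cases hδ : bit δ ≤ turn ord p a
      · have hs : (aut ord).step (.lex p) (.s a δ) = .lex (some a) := if_pos hδ
        rw [hs] at hw
        obtain ⟨u, h1, h2, -⟩ := ih _ hw
        refine ⟨a :: u, ?_, ?_, by simp⟩
        · simp only [val_cons, ev, Prod.fst_mul, h1, ← map_mul, FreeGroup.mul_mk]
          rfl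
        · simp only [val_cons, ev, Prod.snd_mul, toAdd_mul, toAdd_ofAdd, ew]
          omega
      · have hs : (aut ord).step (.lex p) (.s a δ) = .dead := if_neg hδ
        rw [hs] at hw
        exact absurd hw (not_accept_dead ord w)

lemma lex_complete (p : Option (ι × Bool)) (u : List (ι × Bool)) (m : ℕ) :
    ∃ w, (aut ord).evalFrom (.lex p) w ∈ (aut ord).accept ∧
      val j t w = (j (FreeGroup.mk u), Multiplicative.ofAdd (m - ew ord p u)) ∧
      (w = [] → u = [] ∧ m = 0) := by
  induction u generalizing p with
  | nil =>
    induction m with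
    | zero =>
      exact ⟨[], Or.inr ⟨p, rfl⟩, by simp [← FreeGroup.one_eq_mk, ew]; rfl, fun _ => ⟨rfl, rfl⟩⟩
    | succ m ih =>
      obtain ⟨w, h1, h2, -⟩ := ih
      refine ⟨.z true :: w, h1, ?_, by simp⟩
      rw [val_cons, h2]
      simp only [ev, ew, Prod.mk_mul_mk, one_mul, ← ofAdd_add]
      congr 2
      push_cast
      ring
  | cons a u ih =>
    obtain ⟨w, h1, h2, -⟩ := ih (some a)
    obtain ⟨δ, hδ⟩ : ∃ δ, bit δ = turn ord p a := by
      have h3 := turn_nonneg ord p a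
      have h4 := turn_le_one ord p a
      rcases (show turn ord p a = 0 ∨ turn ord p a = 1 by omega) with h | h
      · exact ⟨false, by rw [h]; rfl⟩
      · exact ⟨true, by rw [h]; rfl⟩
    refine ⟨.s a δ :: w, ?_, ?_, by simp⟩
    · have hs : (aut ord).step (.lex p) (.s a δ) = .lex (some a) := if_pos hδ.le
      rw [DFA.evalFrom_cons, hs]
      exact h1
    · rw [val_cons, h2]
      simp only [ev, ew, Prod.mk_mul_mk, ← ofAdd_add, ← map_mul, FreeGroup.mul_mk]
      congr 2
      rw [hδ]
      ring

/-- The submonoid of values of words without `t⁻¹`. -/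
def noTinv : Submonoid (G × Multiplicative ℤ) where
  carrier := {x | ∃ w : List (Letter ι), (∀ l ∈ w, l ≠ .t false) ∧ val j t w = x}
  one_mem' := ⟨[], by simp, rfl⟩
  mul_mem' := by
    rintro _ _ ⟨u, hu, rfl⟩ ⟨v, hv, rfl⟩
    refine ⟨u ++ v, fun l hl => ?_, val_append j t u v⟩
    rcases List.mem_append.mp hl with h | h
    exacts [hu l h, hv l h]

lemma ev_mem_noTinv (x : Letter ι) (hx : x ≠ .t false) : ev j t x ∈ noTinv j t :=
  ⟨[x], by simpa using hx, by simp⟩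

lemma mem_noTinv (ht : f t = Multiplicative.ofAdd 1) (hrange : ∀ g, f g = 1 → ∃ x, j x = g)
    (x : G × Multiplicative ℤ) (hx : 0 ≤ Multiplicative.toAdd (f x.1)) : x ∈ noTinv j t := by
  obtain ⟨g, n⟩ := x
  have hz : ∀ n : Multiplicative ℤ, ((1 : G), n) ∈ noTinv j t := by
    intro n
    obtain ⟨k, hk | hk⟩ := (Multiplicative.toAdd n).eq_nat_or_neg
    · have := pow_mem (ev_mem_noTinv j t (.z true) (by simp)) k
      convert this using 1
      ext
      · simp [ev]
      · apply Multiplicative.toAdd.injective; simp [ev, hk]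
    · have := pow_mem (ev_mem_noTinv j t (.z false) (by simp)) k
      convert this using 1
      ext
      · simp [ev]
      · apply Multiplicative.toAdd.injective; simp [ev, hk]
  have hF : ∀ u : List (ι × Bool), (j (FreeGroup.mk u), (1 : Multiplicative ℤ)) ∈ noTinv j t := by
    intro u
    induction u with
    | nil =>
      rw [← FreeGroup.one_eq_mk, map_one]
      exact (noTinv j t).one_mem
    | cons a u ih =>
      have h1 := ev_mem_noTinv j t (.s a false) (by simp)
      have h2 := mul_mem (mul_mem h1 (hz (Multiplicative.ofAdd (lw a)))) ih
      convert h2 using 1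
      have e : FreeGroup.mk (a :: u) = FreeGroup.mk [a] * FreeGroup.mk u := by
        rw [FreeGroup.mul_mk]; rfl
      ext
      · rw [e, map_mul]; simp only [ev, Prod.fst_mul, mul_one]
      · apply Multiplicative.toAdd.injective; simp [ev, bit]
  obtain ⟨k, hk⟩ := Int.eq_ofNat_of_zero_le hx
  simp only at hk
  obtain ⟨y, hy⟩ := hrange (t⁻¹ ^ k * g) (by
    apply Multiplicative.toAdd.injective
    simp [ht, hk])
  have h3 := pow_mem (ev_mem_noTinv j t (.t true) (by simp)) k
  have h4 := mul_mem (mul_mem h3 (hF y.out)) (hz n)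
  convert h4 using 1
  have hym : FreeGroup.mk y.out = y := Quot.out_eq y
  ext <;> simp [ev, hym, hy]

lemma val_surjective (ht : f t = Multiplicative.ofAdd 1)
    (hrange : ∀ g, f g = 1 → ∃ x, j x = g) :
    Function.Surjective (val j t) := by
  rintro ⟨g, n⟩
  rcases le_or_gt 0 (Multiplicative.toAdd (f g)) with h | h
  · obtain ⟨w, -, hw⟩ := mem_noTinv f j t ht hrange (g, n) h
    exact ⟨w, hw⟩
  · obtain ⟨k, hk⟩ := Int.eq_ofNat_of_zero_le (a := -Multiplicative.toAdd (f g)) (by omega)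
    obtain ⟨w, -, hw⟩ := mem_noTinv f j t ht hrange (t ^ k * g, n) (by
      simp only [map_mul, map_pow, ht, toAdd_mul, toAdd_pow, toAdd_ofAdd, mul_one,
        nsmul_eq_mul]
      omega)
    have hrep : val j t (List.replicate k (.t false)) = (t⁻¹ ^ k, 1) := by
      simp [val, ev]
    refine ⟨List.replicate k (.t false) ++ w, ?_⟩
    rw [val_append, hw, hrep]
    simp

lemma val_accepts (ht : f t = Multiplicative.ofAdd 1) (hker : ∀ x, f (j x) = 1)
    (hrange : ∀ g, f g = 1 → ∃ x, j x = g) :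
    val j t '' (aut ord).accepts = cone ord f j := by
  -- Apart from acceptance and from reading `t`, the initial state behaves like `lex none`.
  have hstart : ∀ x, x ≠ .t true → (aut ord).step .start x = (aut ord).step (.lex none) x := by
    rintro ((_ | _) | (_ | _) | ⟨a, δ⟩) hx
    · rfl
    · exact absurd rfl hx
    all_goals rfl
  ext g
  constructor
  · rintro ⟨w, hw, rfl⟩
    change (aut ord).evalFrom .start w ∈ (aut ord).accept at hw
    rcases w with _ | ⟨x, w⟩
    · simp [aut] at hw
    · by_cases hx : x = .t true
      · subst hx
        left
        rw [DFA.evalFrom_cons] at hw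
        have h1 := height_nonneg f j t ht hker w ((accept_pos_iff ord w).mp hw)
        simp only [Set.mem_ofPred_eq, val_cons, ev, Prod.fst_mul, map_mul, ht, toAdd_mul,
          toAdd_ofAdd]
        omega
      · right
        rw [DFA.evalFrom_cons, hstart x hx, ← DFA.evalFrom_cons] at hw
        obtain ⟨u, h1, h2, h3⟩ := lex_sound ord j t none _ hw
        exact ⟨u, h1, h2, fun h => h3 h (by simp)⟩
  · rintro (h | ⟨u, h1, h2, h3⟩)
    · have h' : 0 < Multiplicative.toAdd (f g.1) := h
      obtain ⟨w, hw, hv⟩ := mem_noTinv f j t ht hrange ((t⁻¹, 1) * g) (by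
        simp only [Prod.fst_mul, map_mul, map_inv, ht, toAdd_mul, toAdd_inv, toAdd_ofAdd]
        omega)
      refine ⟨.t true :: w, (accept_pos_iff ord w).mpr hw, ?_⟩
      rw [val_cons, hv]
      ext <;> simp [ev]
    · obtain ⟨m, hm⟩ := Int.eq_ofNat_of_zero_le h2
      obtain ⟨w, hw, hv, hne⟩ := lex_complete ord j t none u m
      refine ⟨w, ?_, ?_⟩
      · rcases w with _ | ⟨x, w⟩
        · obtain ⟨rfl, rfl⟩ := hne rfl
          have := h3 rfl
          simp only [ew] at hm
          omega
        · change (aut ord).evalFrom .start (x :: w) ∈ (aut ord).accept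
          have hx : x ≠ .t true := by
            rintro rfl
            exact not_accept_dead ord w hw
          rwa [DFA.evalFrom_cons, hstart x hx, ← DFA.evalFrom_cons]
      · rw [hv]
        ext
        · exact h1.symm
        · apply Multiplicative.toAdd.injective
          change (m : ℤ) - ew ord none u = Multiplicative.toAdd g.2
          omega

end Automaton

theorem exists_regular (f : G →* Multiplicative ℤ) (hf : Function.Surjective f) [Fintype ι]
    (φ : ↥(MonoidHom.ker f) ≃* FreeGroup ι) :
    ∃ P : Set (G × Multiplicative ℤ), IsPositiveCone P ∧ HasRegularConeEval P := by
  classical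
  obtain ⟨t, ht⟩ := hf (Multiplicative.ofAdd 1)
  let j : FreeGroup ι →* G := f.ker.subtype.comp φ.symm.toMonoidHom
  have hjinj : Function.Injective j := f.ker.subtype_injective.comp φ.symm.injective
  have hjker : ∀ x, f (j x) = 1 := fun x => (φ.symm x).2
  have hrange : ∀ g, f g = 1 → ∃ x, j x = g := fun g hg => ⟨φ ⟨g, hg⟩, by simp [j]⟩
  let ord : ι × Bool → ℕ := fun a => (Fintype.equivFin (ι × Bool) a : ℕ)
  have hord : Function.Injective ord :=
    Fin.val_injective.comp (Fintype.equivFin (ι × Bool)).injective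
  have hval : ∀ w : List (Letter ι),
      FreeMonoid.lift (ev j t) (FreeMonoid.ofList w) = val j t w := fun w => by
    rw [FreeMonoid.lift_ofList]; rfl
  refine ⟨cone ord f j, isPositiveCone_cone ord hord f j hjinj hjker hrange,
    Letter ι, Fintype.ofFinite _, FreeMonoid.lift (ev j t), ?_,
    (aut ord).accepts, ⟨State ι, Fintype.ofFinite _, aut ord, rfl⟩, ?_⟩
  · intro x
    obtain ⟨w, hw⟩ := val_surjective f j t ht hrange x
    exact ⟨FreeMonoid.ofList w, (hval w).trans hw⟩
  · rw [← val_accepts ord f j t ht hjker hrange]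
    unfold evalLang
    simp only [hval]

end Regular

end FreeByZ

/-- Let `G` be (finitely generated non-abelian free)-by-ℤ, witnessed by a surjection
`f : G → ℤ` whose kernel is isomorphic to a free group of finite rank `≥ 2`. Then
(a) for every positive cone `P_F` of `ker f`, the lexicographic cone
`f⁻¹(ℤ_{>0}) ∪ P_F` is not regular with respect to any finite generating set of `G`;
(b) `G × ℤ` admits a regular positive cone. -/
theorem stmt17 {G : Type*} [Group G] (f : G →* Multiplicative ℤ)
    (hf : Function.Surjective f)
    (ι : Type) [Fintype ι] (hι : 2 ≤ Fintype.card ι)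
    (hfree : Nonempty (↥(MonoidHom.ker f) ≃* FreeGroup ι)) :
    (∀ PF : Set G, IsPositiveConeIn f.ker PF →
      ¬ HasRegularConeEval ({g : G | 0 < Multiplicative.toAdd (f g)} ∪ PF)) ∧
    (∃ P : Set (G × Multiplicative ℤ), IsPositiveCone P ∧ HasRegularConeEval P) := by
  obtain ⟨φ⟩ := hfree
  exact ⟨fun PF hPF => FreeByZ.not_regular f hf ι hι φ PF hPF, FreeByZ.exists_regular f hf φ⟩
end

section
/- Let G be a finitely generated left-orderable group with finite generating set (X, π). There exists a positive cone P of G such that the full preimage π⁻¹(P) ⊆ X* is a regular language if and only if G is the trivial group. -/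
/-- The left translates of a positive cone by distinct elements are distinct: the hypothesis says
`g⁻¹P = h⁻¹P`. -/
theorem IsPositiveCone.eq_of_forall_mul_mem_iff {G : Type*} [Group G] {P : Set G}
    (hP : IsPositiveCone P) {g h : G} (H : ∀ k, g * k ∈ P ↔ h * k ∈ P) : g = h := by
  obtain ⟨-, htri, -, hone⟩ := hP
  have h1 : h * g⁻¹ ∉ P := fun hm => hone (by simpa using (H g⁻¹).2 hm)
  have h2 : g * h⁻¹ ∉ P := fun hm => hone (by simpa using (H h⁻¹).1 hm)
  rcases htri (h * g⁻¹) with hm | hm | hm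
  · exact absurd hm h1
  · exact absurd (by simpa using hm) h2
  · exact (mul_inv_eq_one.1 hm).symm

theorem finite_of_isRegular_preimage {G X : Type*} [Group G] {π : FreeMonoid X →* G}
    (hπ : Function.Surjective π) {P : Set G} (hP : IsPositiveCone P)
    (hreg : Language.IsRegular ({w : List X | π (FreeMonoid.ofList w) ∈ P} : Language X)) :
    Finite G := by
  set L : Language X := {w : List X | π (FreeMonoid.ofList w) ∈ P} with hL
  have hmem : ∀ w : List X, w ∈ L ↔ π (FreeMonoid.ofList w) ∈ P := fun _ => Iff.rfl
  choose s hs using hπ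
  have hfin : Finite (Set.range L.leftQuotient) := hreg.finite_range_leftQuotient
  refine Finite.of_injective
    (fun g => (⟨L.leftQuotient (FreeMonoid.toList (s g)), Set.mem_range_self _⟩ :
      Set.range L.leftQuotient)) fun g h hgh => hP.eq_of_forall_mul_mem_iff fun k => ?_
  have hq := congrArg (FreeMonoid.toList (s k) ∈ ·) (congrArg Subtype.val hgh)
  simpa [hmem, FreeMonoid.ofList_append, hs] using hq

theorem IsPositiveCone.eq_one_of_finite {G : Type*} [Group G] [Finite G] {P : Set G}
    (hP : IsPositiveCone P) (g : G) : g = 1 := by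
  obtain ⟨hmul, htri, -, hone⟩ := hP
  have key : ∀ x : G, x ∉ P := by
    intro x hx
    have hpow : ∀ n : ℕ, x ^ (n + 1) ∈ P := by
      intro n
      induction n with
      | zero => simpa using hx
      | succ n ih => rw [pow_succ]; exact hmul _ ih _ hx
    have hn := hpow (orderOf x - 1)
    rw [Nat.sub_add_cancel (orderOf_pos x), pow_orderOf_eq_one] at hn
    exact hone hn
  rcases htri g with h | h | h
  · exact absurd h (key _)
  · exact absurd h (key _)
  · exact h

/-- A finitely generated left-orderable group `G` with finite generating set `(X, π)`
has a positive cone whose full preimage `π⁻¹(P) ⊆ X*` is a regular language if and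
only if `G` is trivial. -/
theorem stmt18 {G : Type*} [Group G] (X : Type) [Fintype X] (π : FreeMonoid X →* G)
    (hπ : Function.Surjective π) (hLO : ∃ P : Set G, IsPositiveCone P) :
    (∃ P : Set G, IsPositiveCone P ∧
        Language.IsRegular ({w : List X | π (FreeMonoid.ofList w) ∈ P} : Language X)) ↔
      ∀ g : G, g = 1 := by
  constructor
  · rintro ⟨P, hP, hreg⟩ g
    have := finite_of_isRegular_preimage hπ hP hreg
    exact hP.eq_one_of_finite g
  · intro htriv
    refine ⟨∅, ⟨by simp, fun g => Or.inr (Or.inr (htriv g)), by simp, by simp⟩, ?_⟩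
    -- The one-state automaton without accepting states recognises the empty language.
    refine ⟨Unit, inferInstance, ⟨fun _ _ => (), (), ∅⟩, ?_⟩
    ext w
    exact Iff.rfl
end

section
/- Let (X, π) be any finite generating set of the group ℤ². For every positive cone P of ℤ², the full preimage π⁻¹(P) ⊆ X* is not a context-free language. Consequently, no group containing ℤ² as a subgroup admits a positive cone whose full preimage under the evaluation map of a finite generating set is context-free. -/
namespace Pumping

/-! ### Bounded pumping for derivations read by a transducer -/

section Engine

variable {Y N Q α : Type*}

/-- `Gen rules step S n q s q' w`: the sentential form `s` yields (by rules from `rules`) a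
terminal word along which the transducer with transition relation `step` moves from state `q` to
state `q'` while writing `w`. Only triples (state before, nonterminal, state after) lying in `S`
occur at the expanded nonterminals, and `n` is the number of expansions. -/
inductive Gen (rules : Finset (ContextFreeRule Y N)) (step : Q → Y → Q → List α → Prop)
    (S : Set (Q × N × Q)) : ℕ → Q → List (Symbol Y N) → Q → List α → Prop
  | nil (q : Q) : Gen rules step S 0 q [] q []
  | term {n : ℕ} {q q₁ q' : Q} {t : Y} {o w : List α} {s : List (Symbol Y N)} :
      step q t q₁ o → Gen rules step S n q₁ s q' w →
      Gen rules step S n q (.terminal t :: s) q' (o ++ w)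
  | nt {n₁ n₂ : ℕ} {q q₁ q' : Q} {r : ContextFreeRule Y N} {w₁ w₂ : List α}
      {s : List (Symbol Y N)} :
      r ∈ rules → (q, r.input, q₁) ∈ S → Gen rules step S n₁ q r.output q₁ w₁ →
      Gen rules step S n₂ q₁ s q' w₂ →
      Gen rules step S (n₁ + n₂ + 1) q (.nonterminal r.input :: s) q' (w₁ ++ w₂)

variable {rules : Finset (ContextFreeRule Y N)} {step : Q → Y → Q → List α → Prop}

/-- `Gen` without restriction on the triples or on the number of expansions. -/
def GenU (rules : Finset (ContextFreeRule Y N)) (step : Q → Y → Q → List α → Prop)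
    (q : Q) (s : List (Symbol Y N)) (q' : Q) (w : List α) : Prop :=
  ∃ n, Gen rules step Set.univ n q s q' w

lemma Gen.genU {S : Set (Q × N × Q)} {n : ℕ} {q q' : Q} {s : List (Symbol Y N)} {w : List α}
    (h : Gen rules step S n q s q' w) : GenU rules step q s q' w := by
  induction h with
  | nil q => exact ⟨0, .nil q⟩
  | term hs _ ih => obtain ⟨n, h⟩ := ih; exact ⟨n, .term hs h⟩
  | nt hr _ _ _ ih₁ ih₂ =>
    obtain ⟨n, h⟩ := ih₁
    obtain ⟨m, h'⟩ := ih₂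
    exact ⟨_, .nt hr trivial h h'⟩

lemma GenU.term {q q₁ q' : Q} {t : Y} {o w : List α} {s : List (Symbol Y N)}
    (hs : step q t q₁ o) (h : GenU rules step q₁ s q' w) :
    GenU rules step q (.terminal t :: s) q' (o ++ w) := by
  obtain ⟨n, h⟩ := h
  exact ⟨n, .term hs h⟩

lemma GenU.append {q q₁ q' : Q} {s s' : List (Symbol Y N)} {w w' : List α}
    (h : GenU rules step q s q₁ w) (h' : GenU rules step q₁ s' q' w') :
    GenU rules step q (s ++ s') q' (w ++ w') := by
  obtain ⟨n, h⟩ := h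
  induction h with
  | nil => exact h'
  | term hs _ ih => simpa using (ih h').term hs
  | nt hr _ h₁ _ _ ih =>
    obtain ⟨m, hm⟩ := ih h'
    have := Gen.nt hr (Set.mem_univ _) h₁ hm
    exact ⟨_, by simpa using this⟩

lemma GenU.nt {q q' : Q} {r : ContextFreeRule Y N} {w : List α} (hr : r ∈ rules)
    (h : GenU rules step q r.output q' w) :
    GenU rules step q [.nonterminal r.input] q' w := by
  obtain ⟨n, h⟩ := h
  have := Gen.nt hr (Set.mem_univ _) h (.nil _)
  exact ⟨_, by simpa using this⟩

lemma GenU.split {q q' : Q} (s : List (Symbol Y N)) {s' : List (Symbol Y N)} {w : List α}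
    (h : GenU rules step q (s ++ s') q' w) :
    ∃ q₁ w₁ w₂, w = w₁ ++ w₂ ∧ GenU rules step q s q₁ w₁ ∧ GenU rules step q₁ s' q' w₂ := by
  induction s generalizing q w with
  | nil => exact ⟨q, [], w, rfl, ⟨0, .nil q⟩, h⟩
  | cons a s ih =>
    obtain ⟨n, h⟩ := h
    cases h with
    | term hs h =>
      obtain ⟨q₂, w₁, w₂, rfl, h₁, h₂⟩ := ih ⟨_, h⟩
      exact ⟨q₂, _, w₂, by simp, h₁.term hs, h₂⟩
    | nt hr _ h h' =>
      obtain ⟨q₂, w₁, w₂, rfl, h₁, h₂⟩ := ih ⟨_, h'⟩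
      refine ⟨q₂, _, w₂, (List.append_assoc _ _ _).symm, ?_, h₂⟩
      exact (GenU.nt hr ⟨_, h⟩).append h₁

/-- The written word `w` can be pumped within a factor of length at most `p`. -/
def Pump (rules : Finset (ContextFreeRule Y N)) (step : Q → Y → Q → List α → Prop) (p : ℕ)
    (q : Q) (s : List (Symbol Y N)) (q' : Q) (w : List α) : Prop :=
  ∃ u v z x y, w = u ++ (v ++ z ++ x) ++ y ∧ (v ++ z ++ x).length ≤ p ∧ v ++ x ≠ [] ∧
    GenU rules step q s q' (u ++ z ++ y) ∧ GenU rules step q s q' (u ++ (v ++ v ++ z ++ x ++ x) ++ y)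

/-- A pump inside a part of the derivation is a pump of the whole derivation. -/
lemma Pump.context {p : ℕ} {q₀ q q' q₀' : Q} {s s' : List (Symbol Y N)} {w a b : List α}
    (h : Pump rules step p q s q' w)
    (hc : ∀ w', GenU rules step q s q' w' → GenU rules step q₀ s' q₀' (a ++ w' ++ b)) :
    Pump rules step p q₀ s' q₀' (a ++ w ++ b) := by
  obtain ⟨u, v, z, x, y, rfl, hp, hne, h₀, h₂⟩ := h
  refine ⟨a ++ u, v, z, x, y ++ b, by simp, hp, hne, ?_, ?_⟩
  · simpa using hc _ h₀
  · simpa using hc _ h₂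

/-- If every derivation from a single nonterminal with at most `M` expansions can be pumped or
writes at most `b` letters, then a sentential form can be pumped or writes at most `b` letters per
symbol. -/
lemma pump_or_length_le {S : Set (Q × N × Q)} {p b M : ℕ} (hb : 1 ≤ b)
    (hstep : ∀ q t q' o, step q t q' o → o.length ≤ 1)
    (H : ∀ n ≤ M, ∀ q A q' w, Gen rules step S n q [.nonterminal A] q' w →
      Pump rules step p q [.nonterminal A] q' w ∨ w.length ≤ b)
    {n : ℕ} {q q' : Q} {s : List (Symbol Y N)} {w : List α}
    (h : Gen rules step S n q s q' w) (hn : n ≤ M) :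
    Pump rules step p q s q' w ∨ w.length ≤ s.length * b := by
  induction h with
  | nil => right; simp
  | @term n q q₁ q' t o w s hs h ih =>
    rcases ih hn with ih | ih
    · left
      simpa using ih.context (a := o) (b := []) (s' := .terminal t :: s)
        (fun w' hw' => by simpa using hw'.term hs)
    · right
      have := hstep _ _ _ _ hs
      simp only [List.length_append, List.length_cons]
      nlinarith
  | @nt n₁ n₂ q q₁ q' r w₁ w₂ s hr hS h₁ h₂ _ ih₂ =>
    have hA : Gen rules step S (n₁ + 0 + 1) q [.nonterminal r.input] q₁ (w₁ ++ []) :=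
      .nt hr hS h₁ (.nil _)
    rw [List.append_nil] at hA
    rcases H _ (by omega) _ _ _ _ hA with hP | hl
    · left
      simpa using hP.context (a := []) (b := w₂) (s' := .nonterminal r.input :: s)
        (fun w' hw' => by simpa using hw'.append h₂.genU)
    rcases ih₂ (by omega) with hP | hl'
    · left
      simpa using hP.context (a := w₁) (b := []) (s' := .nonterminal r.input :: s)
        (fun w' hw' => by simpa using hA.genU.append hw')
    · right
      simp only [List.length_append, List.length_cons]
      nlinarith

/-- Either a derivation avoids a given triple `(a, A, a')`, or that triple roots one of its
subderivations. -/
lemma Gen.avoid_or_occurs {S : Set (Q × N × Q)} (a : Q) (A : N) (a' : Q)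
    {n : ℕ} {q q' : Q} {s : List (Symbol Y N)} {w : List α}
    (h : Gen rules step S n q s q' w) :
    Gen rules step (S \ {(a, A, a')}) n q s q' w ∨
    ∃ n' ≤ n, ∃ v w' x, w = v ++ w' ++ x ∧ Gen rules step S n' a [.nonterminal A] a' w' ∧
      ∀ w'', GenU rules step a [.nonterminal A] a' w'' →
        GenU rules step q s q' (v ++ w'' ++ x) := by
  induction h with
  | nil q => exact .inl (.nil q)
  | @term n q q₁ q' t o w s hs h ih =>
    rcases ih with ih | ⟨n', hn', v, w', x, rfl, hg, hc⟩
    · exact .inl (.term hs ih)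
    · refine .inr ⟨n', hn', o ++ v, w', x, by simp, hg, fun w'' hw'' => ?_⟩
      simpa using (hc w'' hw'').term hs
  | @nt n₁ n₂ q q₁ q' r w₁ w₂ s hr hS h₁ h₂ ih₁ ih₂ =>
    have hA : Gen rules step S (n₁ + 0 + 1) q [.nonterminal r.input] q₁ (w₁ ++ []) :=
      .nt hr hS h₁ (.nil _)
    rw [List.append_nil] at hA
    by_cases he : (q, r.input, q₁) = (a, A, a')
    · obtain ⟨rfl, rfl, rfl⟩ : q = a ∧ r.input = A ∧ q₁ = a' := by simpa using he
      exact .inr ⟨_, by omega, [], w₁, w₂, by simp, hA, fun w'' hw'' => by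
        simpa using hw''.append h₂.genU⟩
    rcases ih₁ with ih₁ | ⟨n', hn', v, w', x, rfl, hg, hc⟩
    · rcases ih₂ with ih₂ | ⟨n', hn', v, w', x, rfl, hg, hc⟩
      · exact .inl (.nt hr ⟨hS, he⟩ ih₁ ih₂)
      · refine .inr ⟨n', by omega, w₁ ++ v, w', x, by simp, hg, fun w'' hw'' => ?_⟩
        simpa using hA.genU.append (hc w'' hw'')
    · refine .inr ⟨n', by omega, v, w', x ++ w₂, by simp, hg, fun w'' hw'' => ?_⟩
      simpa using (GenU.nt hr (hc w'' hw'')).append h₂.genU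

/-- Bounded pumping, by induction on the number `k` of triples still allowed. If the root triple
recurs below the root, the enclosing derivation is already short (inner induction on the number
of expansions) and the recurrence is a pump; otherwise the root triple can be discarded
from `S`. -/
lemma pump_or_length_le_pow {m p : ℕ}
    (hstep : ∀ q t q' o, step q t q' o → o.length ≤ 1)
    (hm : ∀ r ∈ rules, r.output.length ≤ m) (k : ℕ) (hp : (m + 1) ^ (k + 1) ≤ p)
    (S : Set (Q × N × Q)) (hfin : S.Finite) (hcard : S.ncard ≤ k) (n : ℕ) :
    ∀ q A q' w, Gen rules step S n q [.nonterminal A] q' w →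
      Pump rules step p q [.nonterminal A] q' w ∨ w.length ≤ (m + 1) ^ k := by
  induction k generalizing S n with
  | zero =>
    have hS : S = ∅ := by
      rw [← Set.ncard_eq_zero hfin]
      omega
    subst hS
    intro q A q' w h
    cases h with
    | nt _ h => exact absurd h (Set.notMem_empty _)
  | succ k ihk =>
    induction n using Nat.strong_induction_on with
    | _ n ihn =>
    intro q A q' w h
    cases h with
    | @nt n₁ n₂ _ q₁ _ r w₁ w₂ _ hr hS h₁ h₂ =>
    cases h₂
    rw [List.append_nil]
    have hlen := hm r hr
    have lift : Pump rules step p q r.output q' w₁ →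
        Pump rules step p q [.nonterminal r.input] q' w₁ := fun hP => by
      simpa using hP.context (a := []) (b := []) (s' := [.nonterminal r.input])
        (fun w' hw' => by simpa using GenU.nt hr hw')
    have hpow : 1 ≤ (m + 1) ^ k := Nat.one_le_pow _ _ (by omega)
    have hpow' : 1 ≤ (m + 1) ^ (k + 1) := Nat.one_le_pow _ _ (by omega)
    rcases h₁.avoid_or_occurs q r.input q' with ha | ⟨n', hn', v, w', x, rfl, hg, hc⟩
    · have hcard' : (S \ {(q, r.input, q')}).ncard ≤ k := by
        have := Set.ncard_sdiff_singleton_add_one hS hfin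
        omega
      have hp' : (m + 1) ^ (k + 1) ≤ p :=
        le_trans (Nat.pow_le_pow_right (by omega) (by omega)) hp
      rcases pump_or_length_le (p := p) hpow hstep
        (fun n _ => ihk hp' _ (hfin.subset Set.sdiff_subset) hcard' n) ha le_rfl with hP | hl
      · exact .inl (lift hP)
      · right
        calc w₁.length ≤ r.output.length * (m + 1) ^ k := hl
          _ ≤ (m + 1) * (m + 1) ^ k := Nat.mul_le_mul_right _ (by omega)
          _ = (m + 1) ^ (k + 1) := by ring
    · by_cases hvx : v ++ x = []
      · obtain ⟨rfl, rfl⟩ : v = [] ∧ x = [] := by simpa using hvx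
        simpa using ihn n' (by omega) _ _ _ _ hg
      · left
        rcases pump_or_length_le (p := p) hpow' hstep
          (fun n hn => ihn n (by omega)) h₁ le_rfl with hP | hl
        · exact lift hP
        · refine ⟨[], v, w', x, [], by simp, ?_, hvx, by simpa using hg.genU, ?_⟩
          · calc (v ++ w' ++ x).length ≤ r.output.length * (m + 1) ^ (k + 1) := hl
              _ ≤ (m + 1) * (m + 1) ^ (k + 1) := Nat.mul_le_mul_right _ (by omega)
              _ = (m + 1) ^ (k + 1 + 1) := by ring
              _ ≤ p := hp
          · simpa using GenU.nt hr (hc _ (GenU.nt hr (hc _ hg.genU)))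

end Engine

/-! ### Inverse homomorphic images -/

section InverseHom

variable {Y α : Type*}

/-- The transducer inverting the substitution `h`. A state is the part of some `h a` that is
still to be read; a letter `a` is written when the first letter of `h a` is read. -/
def invStep (h : α → List Y) (K : ℕ) (q : {l : List Y // l.length ≤ K}) (t : Y)
    (q' : {l : List Y // l.length ≤ K}) (o : List α) : Prop :=
  (q.1 = t :: q'.1 ∧ o = []) ∨ (q.1 = [] ∧ ∃ a, h a = t :: q'.1 ∧ o = [a])

variable {h : α → List Y} {K : ℕ}

/-- What the transducer writes is, up to the text pending in the two states, an inverse image of the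
word derived by the grammar. -/
lemma gen_sound (g : ContextFreeGrammar Y) {S n q s q' w}
    (hg : Gen g.rules (invStep h K) S n q s q' w) :
    ∃ y : List Y, g.Derives s (y.map Symbol.terminal) ∧ q.1 ++ w.flatMap h = y ++ q'.1 := by
  induction hg with
  | nil q => exact ⟨[], by simpa using Relation.ReflTransGen.refl, by simp⟩
  | @term n q q₁ q' t o w s hs _ ih =>
    obtain ⟨y, hy, he⟩ := ih
    refine ⟨t :: y, by simpa using hy.append_left [Symbol.terminal t], ?_⟩
    rcases hs with ⟨hq, rfl⟩ | ⟨hq, a, ha, rfl⟩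
    · simpa [hq] using he
    · simpa [hq, ha] using he
  | @nt n₁ n₂ q q₁ q' r w₁ w₂ s hr _ _ _ ih₁ ih₂ =>
    obtain ⟨y₁, hy₁, he₁⟩ := ih₁
    obtain ⟨y₂, hy₂, he₂⟩ := ih₂
    refine ⟨y₁ ++ y₂, ?_, ?_⟩
    · have hp : g.Derives (.nonterminal r.input :: s) (r.output ++ s) :=
        .single ⟨r, hr, .head s⟩
      refine hp.trans ?_
      rw [List.map_append]
      exact (hy₁.append_right s).trans (hy₂.append_left _)
    · rw [List.flatMap_append, ← List.append_assoc, he₁, List.append_assoc, he₂,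
        List.append_assoc]

/-- Reading `q ++ h(w)` from the state `q`, the transducer can write `w` and end with no pending
text. -/
lemma genU_terminals {N : Type*} {rules : Finset (ContextFreeRule Y N)}
    (hK : ∀ a, (h a).length ≤ K) (hne : ∀ a, h a ≠ []) (w : List α) :
    ∀ q : {l : List Y // l.length ≤ K},
      GenU rules (invStep h K) q ((q.1 ++ w.flatMap h).map Symbol.terminal)
        ⟨[], Nat.zero_le _⟩ w := by
  induction w with
  | nil =>
    rintro ⟨q, hq⟩
    induction q with
    | nil => exact ⟨0, .nil _⟩
    | cons t q ih =>
      have hq' : q.length ≤ K := by simp at hq; omega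
      exact GenU.term (o := []) (q₁ := ⟨q, hq'⟩) (.inl ⟨rfl, rfl⟩) (ih hq')
  | cons a w ihw =>
    rintro ⟨q, hq⟩
    induction q with
    | nil =>
      obtain ⟨t, l, hl⟩ := List.exists_cons_of_ne_nil (hne a)
      have hl' : l.length ≤ K := by have := hK a; simp [hl] at this; omega
      have := GenU.term (o := [a]) (q := ⟨[], Nat.zero_le _⟩) (.inr ⟨rfl, a, hl, rfl⟩)
        (ihw ⟨l, hl'⟩)
      simpa [hl] using this
    | cons t q ih =>
      have hq' : q.length ≤ K := by simp at hq; omega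
      exact GenU.term (o := []) (q₁ := ⟨q, hq'⟩) (.inl ⟨rfl, rfl⟩) (ih hq')

/-- A transducer run on a sentential form lifts to any form from which the grammar derives it. -/
lemma genU_of_derives {Q : Type*} {step : Q → Y → Q → List α → Prop} (g : ContextFreeGrammar Y)
    {q q' w s s'} (hd : g.Derives s s') (hg : GenU g.rules step q s' q' w) :
    GenU g.rules step q s q' w := by
  induction hd using Relation.ReflTransGen.head_induction_on with
  | refl => exact hg
  | head hp _ ih =>
    obtain ⟨r, hr, hrw⟩ := hp
    obtain ⟨a, b, rfl, rfl⟩ := hrw.exists_parts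
    obtain ⟨q₂, w₁, w₂, rfl, h₁, h₂⟩ := GenU.split _ ih
    obtain ⟨q₁, w₁, w₃, rfl, h₁, h₃⟩ := GenU.split _ h₁
    exact (h₁.append (GenU.nt hr h₃)).append h₂

/-- Every expanded nonterminal is the input of one of the finitely many rules. -/
lemma Gen.restrict {N Q : Type*} {rules : Finset (ContextFreeRule Y N)}
    {step : Q → Y → Q → List α → Prop} {S : Set (Q × N × Q)} {n q s q' w}
    (hg : Gen rules step S n q s q' w) :
    Gen rules step {x | x.2.1 ∈ ContextFreeRule.input '' (rules : Set (ContextFreeRule Y N))}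
      n q s q' w := by
  induction hg with
  | nil q => exact .nil q
  | term hs _ ih => exact .term hs ih
  | nt hr _ _ _ ih₁ ih₂ => exact .nt hr ⟨_, hr, rfl⟩ ih₁ ih₂

/-- The pumping lemma for the inverse image of a context-free language under the monoid
homomorphism extending a nonerasing map `h` on letters. -/
theorem pumping_inverse_hom [Finite Y] [Finite α] (hne : ∀ a, h a ≠ [])
    {L : Language Y} (hL : L.IsContextFree) :
    ∃ p : ℕ, 1 ≤ p ∧ ∀ w : List α, w.flatMap h ∈ L → p < w.length →
      ∃ u v z x y, w = u ++ (v ++ z ++ x) ++ y ∧ (v ++ z ++ x).length ≤ p ∧ v ++ x ≠ [] ∧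
        (u ++ z ++ y).flatMap h ∈ L ∧ (u ++ (v ++ v ++ z ++ x ++ x) ++ y).flatMap h ∈ L := by
  obtain ⟨g, rfl⟩ := hL
  obtain ⟨K, hK⟩ : ∃ K, ∀ a, (h a).length ≤ K := by
    obtain ⟨K, hK⟩ := (Set.finite_range fun a => (h a).length).bddAbove
    exact ⟨K, fun a => hK ⟨a, rfl⟩⟩
  obtain ⟨m, hm⟩ : ∃ m, ∀ r ∈ g.rules, r.output.length ≤ m :=
    ⟨g.rules.sup fun r => r.output.length,
      fun r hr => Finset.le_sup (f := fun r => r.output.length) hr⟩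
  have : Finite {l : List Y // l.length ≤ K} := (List.finite_length_le Y K).to_subtype
  set S : Set ({l : List Y // l.length ≤ K} × g.NT × {l : List Y // l.length ≤ K}) :=
    {x | x.2.1 ∈ ContextFreeRule.input '' (g.rules : Set (ContextFreeRule Y g.NT))}
  have hS : S.Finite := by
    refine (Set.finite_univ.prod
      (((Finset.finite_toSet g.rules).image ContextFreeRule.input).prod
        Set.finite_univ)).subset ?_
    rintro ⟨a, b, c⟩ hx
    exact ⟨trivial, hx, trivial⟩
  have hone : ∀ j, 1 ≤ (m + 1) ^ j := fun j => Nat.one_le_pow _ _ (by omega)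
  refine ⟨(m + 1) ^ (S.ncard + 1), hone _, fun w hw hlong => ?_⟩
  have hstep : ∀ q t q' o, invStep h K q t q' o → o.length ≤ 1 := by
    rintro q t q' o (⟨-, rfl⟩ | ⟨-, a, -, rfl⟩) <;> simp
  have hsound : ∀ w', GenU g.rules (invStep h K) ⟨[], Nat.zero_le _⟩ [.nonterminal g.initial]
      ⟨[], Nat.zero_le _⟩ w' → w'.flatMap h ∈ g.language := by
    rintro w' ⟨n, hn⟩
    obtain ⟨y, hy, he⟩ := gen_sound g hn
    obtain rfl : w'.flatMap h = y := by simpa using he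
    exact hy
  obtain ⟨n, hn⟩ := genU_of_derives g hw
    (genU_terminals (rules := g.rules) hK hne w ⟨[], Nat.zero_le _⟩)
  rcases pump_or_length_le_pow hstep hm S.ncard le_rfl S hS le_rfl n _ _ _ _ hn.restrict with
    ⟨u, v, z, x, y, hw, hlen, hvx, h₀, h₂⟩ | hl
  · exact ⟨u, v, z, x, y, hw, hlen, hvx, hsound _ h₀, hsound _ h₂⟩
  · have := Nat.pow_le_pow_right (n := m + 1) (by omega) (Nat.le_succ S.ncard)
    simp only [Nat.succ_eq_add_one] at this
    omega

end InverseHom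

/-! ### Words in the generators of the plane -/

section Plane

/-- The displacement in `ℤ²` of a letter: `(axis, sign)` stands for plus or minus (`sign = true`)
the first or second (`axis = true`) basis vector. -/
def val : Bool × Bool → ℤ × ℤ
  | (false, false) => (1, 0)
  | (false, true) => (-1, 0)
  | (true, false) => (0, 1)
  | (true, true) => (0, -1)

/-- Displacement and length of a word in terms of its letter counts. -/
lemma sum_val (d : List (Bool × Bool)) :
    (d.map val).sum =
      ((d.count (false, false) : ℤ) - d.count (false, true),
        (d.count (true, false) : ℤ) - d.count (true, true)) ∧
    d.length = d.count (false, false) + d.count (false, true) + d.count (true, false)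
      + d.count (true, true) := by
  induction d with
  | nil => simp; rfl
  | cons a d ih =>
    obtain ⟨h₁, h₂⟩ := ih
    rcases a with ⟨_ | _, _ | _⟩ <;>
    · simp only [List.map_cons, List.sum_cons, h₁, val, Prod.mk_add_mk, List.length_cons, h₂,
        List.count_cons, Prod.mk.injEq]
      simp
      omega

/-- The word `a^{n₁} b^{n₂} a^{-n₃} b^{-n₄}`. -/
def block (n₁ n₂ n₃ n₄ : ℕ) : List (Bool × Bool) :=
  List.replicate n₁ (false, false) ++ List.replicate n₂ (true, false) ++
    List.replicate n₃ (false, true) ++ List.replicate n₄ (true, true)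

/-- A short factor of a block word does not contain both a letter and its inverse. -/
lemma block_factor {n₁ n₂ n₃ n₄ p : ℕ} (h₂ : p ≤ n₂) (h₃ : p ≤ n₃) {u t y : List (Bool × Bool)}
    (h : block n₁ n₂ n₃ n₄ = u ++ t ++ y) (ht : t.length ≤ p) (c : Bool)
    (hc : (c, false) ∈ t) (hc' : (c, true) ∈ t) : False := by
  obtain ⟨i, hi, hi'⟩ := List.mem_iff_getElem.1 hc
  obtain ⟨j, hj, hj'⟩ := List.mem_iff_getElem.1 hc'
  have key : ∀ k (hk : k < t.length), (block n₁ n₂ n₃ n₄)[u.length + k]? = some t[k] := by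
    intro k hk
    rw [h, List.append_assoc, List.getElem?_append_right (by omega),
      List.getElem?_append_left (by simpa using hk)]
    simp [hk]
  have e₁ := key i hi
  have e₂ := key j hj
  rw [hi'] at e₁
  rw [hj'] at e₂
  simp only [block, List.getElem?_append, List.length_append, List.length_replicate,
    List.getElem?_replicate] at e₁ e₂
  cases c <;> split_ifs at e₁ e₂ <;> simp at e₁ e₂ <;> omega

end Plane

/-! ### Positive cones -/

/-- The preimage of a positive cone is not context-free as soon as the group contains the image of
an injective homomorphism from `ℤ²`. -/
theorem not_isContextFree {G : Type*} [Group G] (φ : Multiplicative (ℤ × ℤ) →* G)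
    (hφ : Function.Injective φ) {Y : Type*} [Finite Y] (ρ : FreeMonoid Y →* G)
    (hρ : Function.Surjective ρ) {P : Set G} (hP : IsPositiveCone P) :
    ¬ Language.IsContextFree ({w : List Y | ρ (FreeMonoid.ofList w) ∈ P} : Language Y) := by
  intro hL
  obtain ⟨hmul, htri, hdisj, hone⟩ := hP
  set C : Set (ℤ × ℤ) := {v | φ (Multiplicative.ofAdd v) ∈ P}
  have hCadd : ∀ a b, a ∈ C → b ∈ C → a + b ∈ C := fun a b ha hb => by
    simpa [C] using hmul _ ha _ hb
  have hC0 : (0 : ℤ × ℤ) ∉ C := by simpa [C] using hone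
  have hCtri : ∀ a, a ≠ 0 → a ∈ C ∨ -a ∈ C := fun a ha => by
    rcases htri (φ (Multiplicative.ofAdd a)) with h | h | h
    · exact .inl h
    · exact .inr (by simpa [C] using h)
    · exact absurd (by simpa using (map_eq_one_iff φ hφ).1 h) ha
  have hchoice : ∀ a : Bool × Bool, ∃ l : List Y,
      ρ (FreeMonoid.ofList l) = φ (Multiplicative.ofAdd (val a)) := fun a => by
    obtain ⟨l, hl⟩ := hρ (φ (Multiplicative.ofAdd (val a)))
    exact ⟨l.toList, by simpa using hl⟩
  choose h hh using hchoice
  have hne : ∀ a, h a ≠ [] := fun a ha => by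
    have h1 := hh a
    rw [ha, FreeMonoid.ofList_nil, map_one] at h1
    have h2 : val a = 0 := by simpa using (map_eq_one_iff φ hφ).1 h1.symm
    rcases a with ⟨_ | _, _ | _⟩ <;> simp [val] at h2
  have heval : ∀ w : List (Bool × Bool), ρ (FreeMonoid.ofList (w.flatMap h)) =
      φ (Multiplicative.ofAdd (w.map val).sum) := fun w => by
    induction w with
    | nil => simp
    | cons a w ih => simp [FreeMonoid.ofList_append, hh, ih, ofAdd_add]
  obtain ⟨p, hp, hpump⟩ := pumping_inverse_hom hne hL
  -- A least positive vector in the box `[-p, p]²`, for the order `a < b ↔ b - a ∈ C`.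
  obtain ⟨⟨i, j⟩, ⟨hijC, hi₁, hi₂, hj₁, hj₂⟩, hmin⟩ :
      ∃ v : ℤ × ℤ, (v ∈ C ∧ -(p : ℤ) ≤ v.1 ∧ v.1 ≤ p ∧ -(p : ℤ) ≤ v.2 ∧ v.2 ≤ p) ∧
        ∀ d : ℤ × ℤ, d ∈ C → -(p : ℤ) ≤ d.1 → d.1 ≤ p → -(p : ℤ) ≤ d.2 → d.2 ≤ p →
          v - d ∉ C := by
    let F : Set (ℤ × ℤ) :=
      {v | v ∈ C ∧ -(p : ℤ) ≤ v.1 ∧ v.1 ≤ p ∧ -(p : ℤ) ≤ v.2 ∧ v.2 ≤ p}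
    have hF : F.Finite := by
      refine ((Set.finite_Icc (-(p : ℤ)) p).prod (Set.finite_Icc (-(p : ℤ)) p)).subset ?_
      rintro v ⟨-, h₁, h₂, h₃, h₄⟩
      exact ⟨⟨h₁, h₂⟩, ⟨h₃, h₄⟩⟩
    have hFne : F.Nonempty := by
      rcases hCtri (1, 0) (by simp) with h | h
      · exact ⟨_, h, by dsimp; omega, by dsimp; omega, by dsimp; omega, by dsimp; omega⟩
      · exact ⟨_, h, by simp; omega, by simp, by simp, by simp⟩
    let r : F → F → Prop := fun a b => b.1 - a.1 ∈ C
    have : Finite F := hF.to_subtype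
    have : IsTrans F r := ⟨fun a b c hab hbc => by
      have := hCadd _ _ hab hbc
      simpa [r] using this⟩
    have : Std.Irrefl r := ⟨fun a ha => hC0 (by simpa [r] using ha)⟩
    obtain ⟨v, -, hv⟩ := (Finite.wellFounded_of_trans_of_irrefl r).has_min Set.univ
      ⟨⟨_, hFne.some_mem⟩, trivial⟩
    exact ⟨v.1, v.2, fun d hd h₁ h₂ h₃ h₄ => hv ⟨d, hd, h₁, h₂, h₃, h₄⟩ trivial⟩
  obtain ⟨n₁, hn₁⟩ := Int.eq_ofNat_of_zero_le (a := p + i) (by omega)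
  obtain ⟨n₂, hn₂⟩ := Int.eq_ofNat_of_zero_le (a := 2 * p + j) (by omega)
  have hsum : ((block n₁ n₂ p (2 * p)).map val).sum = (i, j) := by
    simp only [block, List.map_append, List.map_replicate, val, List.sum_append,
      List.sum_replicate]
    ext <;> simp <;> omega
  have hmem : ∀ w : List (Bool × Bool), w.flatMap h ∈
      ({w : List Y | ρ (FreeMonoid.ofList w) ∈ P} : Language Y) ↔ (w.map val).sum ∈ C := fun w => by
    change ρ _ ∈ P ↔ φ _ ∈ P
    rw [heval]
  obtain ⟨u, v, z, x, y, hw, hlen, hvx, h₀, h₂⟩ := hpump (block n₁ n₂ p (2 * p))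
    ((hmem _).2 (hsum ▸ hijC)) (by simp [block]; omega)
  replace h₀ := (hmem _).1 h₀
  replace h₂ := (hmem _).1 h₂
  obtain ⟨hd, hdlen⟩ := sum_val (v ++ x)
  have hsub : ∀ a, a ∈ v ++ x → a ∈ v ++ z ++ x := by simp; tauto
  have hnot : ∀ c, (v ++ x).count (c, false) = 0 ∨ (v ++ x).count (c, true) = 0 := fun c => by
    by_contra! hcon
    exact block_factor (p := p) (by omega) le_rfl hw hlen c
      (hsub _ (List.count_pos_iff.1 (by omega))) (hsub _ (List.count_pos_iff.1 (by omega)))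
  have hlen' : (v ++ x).length ≤ p := by simp at hlen ⊢; omega
  have hpos : 0 < (v ++ x).length := List.length_pos_iff.2 hvx
  set d := ((v ++ x).map val).sum with hddef
  have hw' : (i, j) = (u.map val).sum + ((v.map val).sum + (z.map val).sum + (x.map val).sum)
      + (y.map val).sum := by
    rw [← hsum, hw]
    simp only [List.map_append, List.sum_append]
  have hdown : (i, j) - d ∈ C := by
    convert h₀ using 1
    rw [hw', hddef]
    simp only [List.map_append, List.sum_append]
    abel
  have hup : (i, j) + d ∈ C := by
    convert h₂ using 1
    rw [hw', hddef]
    simp only [List.map_append, List.sum_append]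
    abel
  obtain ⟨d₁, d₂⟩ := d
  simp only [Prod.mk.injEq] at hd
  obtain ⟨hd₁, hd₂⟩ := hd
  have hA := hnot false
  have hB := hnot true
  have hd0 : (d₁, d₂) ≠ (0 : ℤ × ℤ) := by
    intro h0
    simp only [Prod.mk_eq_zero] at h0
    omega
  rcases hCtri _ hd0 with hc | hc
  · exact hmin _ hc (by dsimp; omega) (by dsimp; omega) (by dsimp; omega) (by dsimp; omega) hdown
  · refine hmin _ hc ?_ ?_ ?_ ?_ (by simpa using hup) <;> dsimp <;> omega

end Pumping

/-- For any finite generating set `(X, π)` of `ℤ²` and any positive cone `P` of `ℤ²`,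
the full preimage `π⁻¹(P) ⊆ X*` is not context-free. Consequently, no group containing
`ℤ²` as a subgroup has a positive cone with context-free full preimage under the
evaluation map of a finite generating set. -/
theorem stmt19 :
    (∀ (X : Type) [Fintype X] (π : FreeMonoid X →* Multiplicative (ℤ × ℤ)),
      Function.Surjective π →
      ∀ P : Set (Multiplicative (ℤ × ℤ)), IsPositiveCone P →
        ¬ Language.IsContextFree
          ({w : List X | π (FreeMonoid.ofList w) ∈ P} : Language X)) ∧
    (∀ (G : Type) [Group G] (H : Subgroup G),
      Nonempty (↥H ≃* Multiplicative (ℤ × ℤ)) →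
      ∀ (Y : Type) [Fintype Y] (ρ : FreeMonoid Y →* G), Function.Surjective ρ →
      ∀ P : Set G, IsPositiveCone P →
        ¬ Language.IsContextFree
          ({w : List Y | ρ (FreeMonoid.ofList w) ∈ P} : Language Y)) := by
  have main : ∀ (G : Type) [Group G] (H : Subgroup G),
      Nonempty (↥H ≃* Multiplicative (ℤ × ℤ)) →
      ∀ (Y : Type) [Fintype Y] (ρ : FreeMonoid Y →* G), Function.Surjective ρ →
      ∀ P : Set G, IsPositiveCone P →
        ¬ Language.IsContextFree
          ({w : List Y | ρ (FreeMonoid.ofList w) ∈ P} : Language Y) := by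
    rintro G _ H ⟨e⟩ Y _ ρ hρ P hP
    exact Pumping.not_isContextFree (H.subtype.comp e.symm.toMonoidHom)
      (H.subtype_injective.comp e.symm.injective) ρ hρ hP
  exact ⟨fun X _ π hπ P hP => main _ ⊤ ⟨Subgroup.topEquiv⟩ X π hπ P hP, main⟩
end
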